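/- arXiv:1904.04988 — 3 statements merged into one kernel-verified Lean document; each statement's English description precedes it below -/
import Mathlib

section
/- The fiber cone F(I) = T/J is a hypersurface ring: there exists a nonzero polynomial f ∈ T with f not a unit such that J is the principal ideal generated by f, i.e. J = (f). -/
open MvPolynomial

/-!
Write `E c` for the exponent of the monomial obtained by evaluating `z ^ c` at the generators, and
put `s = ∑ bᵢ / aᵢ`. All ideals `𝔪 I ^ d` are monomial, so `z ^ c ∈ J` if and only if some `c'` of
the same degree satisfies `E c' < E c`. Dividing the coordinates of `E c` by the `aᵢ` and summing
gives `deg c + (s - 1) cₙ₊₁`; hence, within a fixed degree, `E c' < E c` forces `cₙ₊₁ < c'ₙ₊₁` if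
`s ≤ 1` and `c'ₙ₊₁ < cₙ₊₁` if `s > 1`.

If `s ≤ 1`, let `k > 0` be least with `∑ ⌈k bᵢ / aᵢ⌉ ≤ k`. Equality holds, and `J` is generated by
`∏ zᵢ ^ ⌈k bᵢ / aᵢ⌉ - t zₙ₊₁ ^ k` for some `t ∈ {0, 1}`. If `s > 1`, let `k > 0` be least with
`k ≤ ∑ ⌊k bᵢ / aᵢ⌋`; then `J` is generated by `zₙ₊₁ ^ k`. In both cases division by the generator
leaves a remainder whose monomials have distinct minimal images under `E` in each degree, and such
a polynomial lies in `J` only if it vanishes.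
-/

open Finsupp (linearCombination)
open scoped MonomialOrder Pointwise

section MonomialDivision

variable {τ R : Type*} [CommRing R]

theorem ideal_eq_span_singleton_of_forall_eq_zero (m : MonomialOrder τ)
    {J : Ideal (MvPolynomial τ R)} {g : MvPolynomial τ R} (hgJ : g ∈ J)
    (hg : IsUnit (m.leadingCoeff g))
    (hJ : ∀ r ∈ J, (∀ c ∈ r.support, ¬ m.degree g ≤ c) → r = 0) :
    J = Ideal.span {g} := by
  refine le_antisymm (fun f hf => ?_) ((Ideal.span_singleton_le_iff_mem _).2 hgJ)
  obtain ⟨q, r, rfl, -, hr⟩ := m.div_single hg f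
  have hrJ : r ∈ J := (J.add_mem_iff_right (J.mul_mem_left q hgJ)).1 hf
  rw [hJ r hrJ hr, add_zero]
  exact Ideal.mul_mem_left _ q (Ideal.mem_span_singleton_self g)

variable (m : MonomialOrder τ) {c c' : τ →₀ ℕ}

theorem degree_monomial_lt_degree_monomial [Nontrivial R] (h : c' ≺[m] c) (t : R) :
    m.degree (monomial c' t) ≺[m] m.degree (monomial c (1 : R)) := by
  classical
  rw [m.degree_monomial 1, if_neg one_ne_zero]
  exact (m.degree_monomial_le t).trans_lt h

theorem degree_monomial_sub_monomial [Nontrivial R] (h : c' ≺[m] c) (t : R) :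
    m.degree (monomial c 1 - monomial c' t) = c := by
  classical
  rw [m.degree_sub_of_lt (degree_monomial_lt_degree_monomial m h t), m.degree_monomial,
    if_neg one_ne_zero]

theorem leadingCoeff_monomial_sub_monomial [Nontrivial R] (h : c' ≺[m] c) (t : R) :
    m.leadingCoeff (monomial c 1 - monomial c' t) = 1 := by
  rw [m.leadingCoeff_sub_of_lt (degree_monomial_lt_degree_monomial m h t),
    m.leadingCoeff_monomial]

end MonomialDivision

section MonomialFamily

variable {σ τ R : Type*}

theorem exists_single_add_le_iff_lt {s m : σ →₀ ℕ} :
    (∃ i, Finsupp.single i 1 + s ≤ m) ↔ s < m := by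
  constructor
  · rintro ⟨i, hi⟩
    exact (lt_add_of_pos_left s (by simp [pos_iff_ne_zero])).trans_le hi
  · intro h
    obtain ⟨hle, i, hi⟩ := Finsupp.lt_def.1 h
    refine ⟨i, ?_⟩
    rw [← tsub_add_cancel_of_le hle]
    gcongr
    simpa [Nat.one_le_iff_ne_zero, Nat.sub_eq_zero_iff_le] using hi

variable [CommSemiring R]

theorem mem_span_range_X_mul_span_monomial_iff {S : Set (σ →₀ ℕ)} {p : MvPolynomial σ R} :
    p ∈ Ideal.span (Set.range X) * Ideal.span ((fun s => monomial s (1 : R)) '' S) ↔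
      ∀ m ∈ p.support, ∃ s ∈ S, s < m := by
  have hprod : Set.range (X (R := R)) * (fun s => monomial s (1 : R)) '' S =
      (fun s => monomial s (1 : R)) '' {e | ∃ s ∈ S, ∃ i, Finsupp.single i 1 + s = e} := by
    ext q
    simp only [Set.mem_mul, Set.mem_range, Set.mem_image, Set.mem_ofPred_eq, X]
    constructor
    · rintro ⟨_, ⟨i, rfl⟩, _, ⟨s, hs, rfl⟩, rfl⟩
      exact ⟨_, ⟨s, hs, i, rfl⟩, by simp⟩
    · rintro ⟨_, ⟨s, hs, i, rfl⟩, rfl⟩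
      exact ⟨_, ⟨i, rfl⟩, _, ⟨s, hs, rfl⟩, by simp⟩
  rw [Ideal.span_mul_span', hprod, mem_ideal_span_monomial_image]
  simp only [← exists_single_add_le_iff_lt, Set.mem_ofPred_eq]
  grind

theorem aeval_monomial_eq_monomial (v : τ → σ →₀ ℕ) (c : τ →₀ ℕ) (r : R) :
    aeval (fun t => monomial (v t) (1 : R)) (monomial c r) =
      monomial (linearCombination ℕ v c) r := by
  rw [aeval_monomial, Finsupp.linearCombination_apply, monomial_finsupp_sum_index, algebraMap_eq]
  simp only [monomial_pow, one_pow]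

theorem span_range_monomial_pow (v : τ → σ →₀ ℕ) (d : ℕ) :
    Ideal.span (Set.range fun t => monomial (v t) (1 : R)) ^ d =
      Ideal.span ((fun s => monomial s (1 : R)) ''
        (linearCombination ℕ v '' {c | c.degree = d})) := by
  rw [Ideal.span, Submodule.span_pow, ← Set.image_univ, Finsupp.image_pow_eq_finsuppProd_image,
    Set.image_image]
  simp [Finsupp.linearCombination_apply, monomial_finsupp_sum_index, monomial_pow, Ideal.span]

theorem mem_span_range_X_mul_span_range_monomial_pow_iff {v : τ → σ →₀ ℕ} {d : ℕ}
    {p : MvPolynomial σ R} :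
    p ∈ Ideal.span (Set.range X) *
        Ideal.span (Set.range fun t => monomial (v t) (1 : R)) ^ d ↔
      ∀ m ∈ p.support, ∃ c : τ →₀ ℕ, c.degree = d ∧ linearCombination ℕ v c < m := by
  rw [span_range_monomial_pow, mem_span_range_X_mul_span_monomial_iff]
  simp only [Set.exists_mem_image, Set.mem_ofPred_eq]

end MonomialFamily

section FiberCone

variable {σ τ R : Type*} [CommRing R]

/-- `J` is the defining ideal of the fiber cone `⨁ I ^ d / 𝔪 I ^ d` of the ideal `I` generated by
the family `u`, where `𝔪` is the ideal generated by the variables: the kernel of the graded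
surjection from the polynomial ring on the index type of `u`, described one degree at a time. -/
def IsFiberConeIdeal (u : τ → MvPolynomial σ R) (J : Ideal (MvPolynomial τ R)) : Prop :=
  ∀ f, f ∈ J ↔ ∀ d : ℕ, aeval u (homogeneousComponent d f) ∈
    Ideal.span (Set.range X) * Ideal.span (Set.range u) ^ d

namespace IsFiberConeIdeal

variable {J : Ideal (MvPolynomial τ R)}

theorem mem_of_isHomogeneous {u : τ → MvPolynomial σ R} (hJ : IsFiberConeIdeal u J)
    {f : MvPolynomial τ R} {d : ℕ} (hf : f.IsHomogeneous d)
    (h : aeval u f ∈ Ideal.span (Set.range X) * Ideal.span (Set.range u) ^ d) : f ∈ J := by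
  refine (hJ f).2 fun e => ?_
  rw [homogeneousComponent_of_mem hf]
  split_ifs with he
  · rwa [he]
  · simp

variable {v : τ → σ →₀ ℕ} (hJ : IsFiberConeIdeal (fun t => monomial (v t) (1 : R)) J)
include hJ

theorem monomial_mem {c c' : τ →₀ ℕ} (hdeg : c'.degree = c.degree)
    (hlt : linearCombination ℕ v c' < linearCombination ℕ v c) (r : R) :
    monomial c r ∈ J := by
  refine hJ.mem_of_isHomogeneous (isHomogeneous_monomial r rfl) ?_
  rw [aeval_monomial_eq_monomial, mem_span_range_X_mul_span_range_monomial_pow_iff]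
  intro m hm
  obtain rfl : m = linearCombination ℕ v c := by simpa using support_monomial_subset hm
  exact ⟨c', hdeg, hlt⟩

theorem monomial_sub_monomial_mem {c c' : τ →₀ ℕ} (hdeg : c'.degree = c.degree)
    (heq : linearCombination ℕ v c' = linearCombination ℕ v c) (r : R) :
    monomial c r - monomial c' r ∈ J := by
  refine hJ.mem_of_isHomogeneous
    ((isHomogeneous_monomial r rfl).sub (isHomogeneous_monomial r hdeg)) ?_
  simp [aeval_monomial_eq_monomial, heq, -aeval_eq_bind₁]

theorem ne_top [Nontrivial R] : J ≠ ⊤ := by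
  intro htop
  have hone : (1 : MvPolynomial σ R) ∈ Ideal.span (Set.range X) *
      Ideal.span (Set.range fun t => monomial (v t) (1 : R)) ^ 0 := by
    simpa [homogeneousComponent_of_mem (isHomogeneous_one τ R)] using
      (hJ 1).1 (htop ▸ Submodule.mem_top) 0
  obtain ⟨c, -, hc⟩ := mem_span_range_X_mul_span_range_monomial_pow_iff.1 hone 0 (by simp)
  exact not_lt_zero hc

theorem eq_zero_of_mem {r : MvPolynomial τ R} (hr : r ∈ J)
    (hmin : ∀ c ∈ r.support, ∀ c', c'.degree = c.degree →
      ¬ linearCombination ℕ v c' < linearCombination ℕ v c)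
    (hinj : ∀ c ∈ r.support, ∀ c' ∈ r.support, c'.degree = c.degree →
      linearCombination ℕ v c' = linearCombination ℕ v c → c' = c) :
    r = 0 := by
  classical
  by_contra hne
  obtain ⟨c, hc⟩ := support_nonempty.2 hne
  have hcoeff : coeff (linearCombination ℕ v c)
      (aeval (fun t => monomial (v t) (1 : R)) (homogeneousComponent c.degree r)) =
        coeff c r := by
    rw [homogeneousComponent_apply, map_sum, coeff_sum]
    simp only [aeval_monomial_eq_monomial, coeff_monomial]
    rw [Finset.sum_eq_single_of_mem c (by simpa using hc), if_pos rfl]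
    intro c' hc' hne'
    rw [Finset.mem_filter] at hc'
    exact if_neg fun heq => hne' (hinj c hc c' hc'.1 hc'.2 heq)
  obtain ⟨c', hdeg, hlt⟩ := mem_span_range_X_mul_span_range_monomial_pow_iff.1
    ((hJ r).1 hr c.degree) (linearCombination ℕ v c)
    (by rw [mem_support_iff, hcoeff]; exact mem_support_iff.1 hc)
  exact hmin c hc c' hdeg hlt

theorem exists_monomial_sub_monomial_mem {c c' : τ →₀ ℕ} (hdeg : c'.degree = c.degree)
    (hle : linearCombination ℕ v c' ≤ linearCombination ℕ v c) :
    ∃ t : R, monomial c 1 - monomial c' t ∈ J := by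
  rcases hle.eq_or_lt with heq | hlt
  · exact ⟨1, hJ.monomial_sub_monomial_mem hdeg heq 1⟩
  · exact ⟨0, by simpa using hJ.monomial_mem hdeg hlt 1⟩

theorem eq_span_singleton (m : MonomialOrder τ) {g : MvPolynomial τ R}
    (hgJ : g ∈ J) (hg : m.Monic g)
    (hmin : ∀ c c' : τ →₀ ℕ, ¬ m.degree g ≤ c → c'.degree = c.degree →
      ¬ linearCombination ℕ v c' < linearCombination ℕ v c)
    (hinj : ∀ c c' : τ →₀ ℕ, ¬ m.degree g ≤ c → ¬ m.degree g ≤ c' → c'.degree = c.degree →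
      linearCombination ℕ v c' = linearCombination ℕ v c → c' = c) :
    J = Ideal.span {g} :=
  ideal_eq_span_singleton_of_forall_eq_zero m hgJ (hg.symm ▸ isUnit_one) fun _ hr hstd =>
    hJ.eq_zero_of_mem hr (fun c hc c' => hmin c c' (hstd c hc))
      (fun c hc c' hc' => hinj c c' (hstd c hc) (hstd c' hc'))

end IsFiberConeIdeal

end FiberCone

section Rounding

theorem mul_ceilDiv_le_mul_ceilDiv {p q j k : ℕ} (hp : 0 < p) (h : j ≤ k) :
    (j * q) ⌈/⌉ p ≤ (k * q) ⌈/⌉ p :=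
  (gc_mul_ceilDiv hp).monotone_l (Nat.mul_le_mul_right q h)

variable {ι : Type*} [Fintype ι] {a b : ι → ℕ}

/-- The sum of the ratios `b i / a i`. Its position relative to `1` says on which side of the
hyperplane through the points `a i • eᵢ` the point `b` lies. -/
def ratioSum (a b : ι → ℕ) : ℚ := ∑ i, (b i / a i : ℚ)

theorem exists_mul_eq_mul_and_sum_eq_mul_ratioSum (ha : ∀ i, 0 < a i) :
    ∃ k, 0 < k ∧ ∃ w : ι → ℕ, (∀ i, k * b i = a i * w i) ∧
      (∑ i, w i : ℚ) = k * ratioSum a b := by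
  classical
  have hprod (i : ι) : a i * ∏ j ∈ Finset.univ.erase i, a j = ∏ j, a j :=
    Finset.mul_prod_erase _ _ (Finset.mem_univ i)
  refine ⟨∏ j, a j, Finset.prod_pos fun i _ => ha i,
    fun i => (∏ j ∈ Finset.univ.erase i, a j) * b i, fun i => ?_, ?_⟩
  · rw [← hprod i, mul_assoc]
  · rw [ratioSum, Finset.mul_sum]
    refine Finset.sum_congr rfl fun i _ => ?_
    have : (a i : ℚ) ≠ 0 := mod_cast (ha i).ne'
    rw [← hprod i]
    push_cast
    field_simp

theorem exists_sum_ceilDiv_le (ha : ∀ i, 0 < a i) (hs : ratioSum a b ≤ 1) :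
    ∃ k, 0 < k ∧ ∑ i, (k * b i) ⌈/⌉ a i ≤ k := by
  obtain ⟨k, hk, w, hw, hsum⟩ := exists_mul_eq_mul_and_sum_eq_mul_ratioSum (b := b) ha
  refine ⟨k, hk, ?_⟩
  calc ∑ i, (k * b i) ⌈/⌉ a i
      ≤ ∑ i, w i := Finset.sum_le_sum fun i _ => (ceilDiv_le_iff_le_mul (ha i)).2 (hw i).le
    _ ≤ k := by
      have : (∑ i, w i : ℚ) ≤ k := hsum.trans_le (mul_le_of_le_one_right k.cast_nonneg hs)
      exact_mod_cast this

theorem exists_le_sum_div (ha : ∀ i, 0 < a i) (hs : 1 ≤ ratioSum a b) :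
    ∃ k, 0 < k ∧ k ≤ ∑ i, k * b i / a i := by
  obtain ⟨k, hk, w, hw, hsum⟩ := exists_mul_eq_mul_and_sum_eq_mul_ratioSum (b := b) ha
  refine ⟨k, hk, ?_⟩
  calc k ≤ ∑ i, w i := by
        have : (k : ℚ) ≤ ∑ i, (w i : ℚ) :=
          (le_mul_of_one_le_right k.cast_nonneg hs).trans_eq hsum.symm
        exact_mod_cast this
    _ ≤ ∑ i, k * b i / a i := Finset.sum_le_sum fun i _ =>
      (Nat.le_div_iff_mul_le (ha i)).2 (by rw [hw i, mul_comm])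

theorem sum_ceilDiv_eq_of_isLeast (ha : ∀ i, 0 < a i) (hb : b ≠ 0) {k : ℕ}
    (hk : IsLeast {k | 0 < k ∧ ∑ i, (k * b i) ⌈/⌉ a i ≤ k} k) :
    ∑ i, (k * b i) ⌈/⌉ a i = k := by
  obtain ⟨⟨hpos, hle⟩, hleast⟩ := hk
  obtain ⟨i, hi⟩ := Function.ne_iff.1 hb
  have hceil_pos : 0 < (k * b i) ⌈/⌉ a i := by
    rw [← not_le, ceilDiv_le_iff_le_mul (ha i), mul_zero, not_le]
    exact Nat.mul_pos hpos (Nat.pos_of_ne_zero hi)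
  have hsum_pos : 0 < ∑ i, (k * b i) ⌈/⌉ a i :=
    Finset.sum_pos' (fun _ _ => Nat.zero_le _) ⟨i, Finset.mem_univ i, hceil_pos⟩
  refine hle.eq_of_not_lt fun hlt => ?_
  have hpred : ∑ i, ((k - 1) * b i) ⌈/⌉ a i ≤ k - 1 :=
    (Finset.sum_le_sum fun i _ => mul_ceilDiv_le_mul_ceilDiv (ha i) (Nat.sub_le k 1)).trans
      (Nat.le_sub_one_of_lt hlt)
  have := hleast ⟨by omega, hpred⟩
  omega

end Rounding

section Exponents

variable {n : ℕ} (a b : Fin n → ℕ)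

/-- The exponents of the monomials `x₁ ^ a₁, …, xₙ ^ aₙ, x₁ ^ b₁ ⋯ xₙ ^ bₙ`; the mixed monomial has
index `Fin.last n`. -/
noncomputable def generatorExponent : Fin (n + 1) → Fin n →₀ ℕ :=
  Fin.snoc (fun i => Finsupp.single i (a i)) (Finsupp.equivFunOnFinite.symm b)

/-- The exponent of the monomial to which `z ^ c` evaluates at the generators. -/
noncomputable def evalExponent : (Fin (n + 1) →₀ ℕ) →ₗ[ℕ] (Fin n →₀ ℕ) :=
  linearCombination ℕ (generatorExponent a b)

theorem eq_monomial_generatorExponent {R : Type*} [CommRing R]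
    {u : Fin (n + 1) → MvPolynomial (Fin n) R} (hu : ∀ i : Fin n, u i.castSucc = X i ^ a i)
    (hulast : u (Fin.last n) = ∏ i, X i ^ b i) :
    u = fun t => monomial (generatorExponent a b t) 1 := by
  funext t
  induction t using Fin.lastCases with
  | last => simp [generatorExponent, hulast, monomial_eq, Finsupp.prod_fintype]
  | cast i => simp [generatorExponent, hu, X_pow_eq_monomial]

theorem degree_eq_sum_castSucc_add_last (c : Fin (n + 1) →₀ ℕ) :
    c.degree = ∑ i : Fin n, c i.castSucc + c (Fin.last n) := by
  rw [Finsupp.degree_eq_sum, Fin.sum_univ_castSucc]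

/-- The exponent `(⌈k b₁ / a₁⌉, …, ⌈k bₙ / aₙ⌉)` of the least product of the `xᵢ ^ aᵢ` divisible by
the `k`-th power of the mixed monomial. -/
noncomputable def ceilExponent (k : ℕ) : Fin n →₀ ℕ :=
  Finsupp.equivFunOnFinite.symm fun i => (k * b i) ⌈/⌉ a i

variable {a b} {c c' : Fin (n + 1) →₀ ℕ}

theorem evalExponent_apply (c : Fin (n + 1) →₀ ℕ) (i : Fin n) :
    evalExponent a b c i = a i * c i.castSucc + b i * c (Fin.last n) := by
  rw [evalExponent, Finsupp.linearCombination_apply, Finsupp.sum_fintype _ _ (by simp),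
    Fin.sum_univ_castSucc]
  simp [generatorExponent, Finsupp.single_apply, mul_comm]

theorem sum_evalExponent_div (ha : ∀ i, 0 < a i) (c : Fin (n + 1) →₀ ℕ) :
    ∑ i, (evalExponent a b c i / a i : ℚ) =
      c.degree + (ratioSum a b - 1) * c (Fin.last n) := by
  have hterm (i : Fin n) : (evalExponent a b c i / a i : ℚ) =
      c i.castSucc + b i / a i * c (Fin.last n) := by
    have : (a i : ℚ) ≠ 0 := mod_cast (ha i).ne'
    rw [evalExponent_apply]
    push_cast
    field_simp
  rw [Finset.sum_congr rfl fun i _ => hterm i, Finset.sum_add_distrib, ← Finset.sum_mul,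
    ← ratioSum, degree_eq_sum_castSucc_add_last]
  push_cast
  ring

theorem ratioSum_sub_one_mul_lt_of_evalExponent_lt (ha : ∀ i, 0 < a i) (hdeg : c'.degree = c.degree)
    (hlt : evalExponent a b c' < evalExponent a b c) :
    (ratioSum a b - 1) * c' (Fin.last n) < (ratioSum a b - 1) * c (Fin.last n) := by
  obtain ⟨hle, i, hi⟩ := Finsupp.lt_def.1 hlt
  have hpos (i : Fin n) : (0 : ℚ) < a i := mod_cast ha i
  have hsum : ∑ i, (evalExponent a b c' i / a i : ℚ) < ∑ i, (evalExponent a b c i / a i : ℚ) :=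
    Finset.sum_lt_sum
      (fun j _ => div_le_div_of_nonneg_right (mod_cast hle j) (hpos j).le)
      ⟨i, Finset.mem_univ i, div_lt_div_of_pos_right (mod_cast hi) (hpos i)⟩
  rwa [sum_evalExponent_div ha, sum_evalExponent_div ha, hdeg, add_lt_add_iff_left] at hsum

theorem last_lt_last_of_ratioSum_le_one (ha : ∀ i, 0 < a i) (hs : ratioSum a b ≤ 1)
    (hdeg : c'.degree = c.degree) (hlt : evalExponent a b c' < evalExponent a b c) :
    c (Fin.last n) < c' (Fin.last n) := by
  have h := ratioSum_sub_one_mul_lt_of_evalExponent_lt ha hdeg hlt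
  exact_mod_cast lt_of_mul_lt_mul_of_nonpos_left h (sub_nonpos.2 hs)

theorem last_lt_last_of_one_lt_ratioSum (ha : ∀ i, 0 < a i) (hs : 1 < ratioSum a b)
    (hdeg : c'.degree = c.degree) (hlt : evalExponent a b c' < evalExponent a b c) :
    c' (Fin.last n) < c (Fin.last n) := by
  have h := ratioSum_sub_one_mul_lt_of_evalExponent_lt ha hdeg hlt
  exact_mod_cast lt_of_mul_lt_mul_left h (sub_pos.2 hs).le

theorem last_eq_last_of_ratioSum_ne_one (ha : ∀ i, 0 < a i) (hs : ratioSum a b ≠ 1)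
    (hdeg : c'.degree = c.degree) (heq : evalExponent a b c' = evalExponent a b c) :
    c' (Fin.last n) = c (Fin.last n) := by
  have h := sum_evalExponent_div (b := b) ha c'
  rw [heq, sum_evalExponent_div ha, hdeg, add_right_inj] at h
  exact_mod_cast (mul_left_cancel₀ (sub_ne_zero.2 hs) h).symm

theorem eq_of_evalExponent_eq_of_last_eq (ha : ∀ i, 0 < a i)
    (heq : evalExponent a b c' = evalExponent a b c)
    (hlast : c' (Fin.last n) = c (Fin.last n)) : c' = c := by
  ext t
  induction t using Fin.lastCases with
  | last => exact hlast
  | cast i =>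
    have hi := DFunLike.congr_fun heq i
    rw [evalExponent_apply, evalExponent_apply, hlast, add_left_inj] at hi
    exact Nat.eq_of_mul_eq_mul_left (ha i) hi

theorem ceilDiv_add_le_of_evalExponent_le (ha : ∀ i, 0 < a i)
    (hle : evalExponent a b c' ≤ evalExponent a b c) {j : ℕ}
    (hj : c' (Fin.last n) = c (Fin.last n) + j) (i : Fin n) :
    (j * b i) ⌈/⌉ a i + c' i.castSucc ≤ c i.castSucc := by
  have hi := hle i
  rw [evalExponent_apply, evalExponent_apply, hj] at hi
  have hcast : c' i.castSucc ≤ c i.castSucc :=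
    Nat.le_of_mul_le_mul_left (by nlinarith) (ha i)
  rw [← Nat.le_sub_iff_add_le hcast, ceilDiv_le_iff_le_mul (ha i), Nat.mul_sub]
  exact Nat.le_sub_of_add_le (by linarith)

theorem sum_ceilDiv_le_of_evalExponent_le (ha : ∀ i, 0 < a i) (hdeg : c'.degree = c.degree)
    (hle : evalExponent a b c' ≤ evalExponent a b c) {j : ℕ}
    (hj : c' (Fin.last n) = c (Fin.last n) + j) : ∑ i, (j * b i) ⌈/⌉ a i ≤ j := by
  have hsum := Finset.sum_le_sum fun i (_ : i ∈ Finset.univ) =>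
    ceilDiv_add_le_of_evalExponent_le ha hle hj i
  rw [Finset.sum_add_distrib] at hsum
  rw [degree_eq_sum_castSucc_add_last, degree_eq_sum_castSucc_add_last] at hdeg
  omega

theorem le_add_div_of_evalExponent_le (ha : ∀ i, 0 < a i)
    (hle : evalExponent a b c' ≤ evalExponent a b c) {j : ℕ}
    (hj : c (Fin.last n) = c' (Fin.last n) + j) (i : Fin n) :
    c' i.castSucc ≤ c i.castSucc + j * b i / a i := by
  have hi := hle i
  rw [evalExponent_apply, evalExponent_apply, hj] at hi
  rw [← Nat.mul_add_div (ha i), Nat.le_div_iff_mul_le (ha i)]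
  linarith

theorem le_sum_div_of_evalExponent_le (ha : ∀ i, 0 < a i) (hdeg : c'.degree = c.degree)
    (hle : evalExponent a b c' ≤ evalExponent a b c) {j : ℕ}
    (hj : c (Fin.last n) = c' (Fin.last n) + j) : j ≤ ∑ i, j * b i / a i := by
  have hsum := Finset.sum_le_sum fun i (_ : i ∈ Finset.univ) =>
    le_add_div_of_evalExponent_le ha hle hj i
  rw [Finset.sum_add_distrib] at hsum
  rw [degree_eq_sum_castSucc_add_last, degree_eq_sum_castSucc_add_last] at hdeg
  omega

theorem single_last_lex_lt_mapDomain_castSucc {w : Fin n →₀ ℕ} (hw : w ≠ 0) (k : ℕ) :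
    Finsupp.single (Fin.last n) k ≺[MonomialOrder.lex] w.mapDomain Fin.castSucc := by
  obtain ⟨i, hi, hmin⟩ := wellFounded_lt.has_min {i | w i ≠ 0} (DFunLike.ne_iff.1 hw)
  rw [MonomialOrder.lex_lt_iff, Finsupp.Lex.lt_iff]
  have hcast (j : Fin n) : w.mapDomain Fin.castSucc j.castSucc = w j :=
    Finsupp.mapDomain_apply (Fin.castSucc_injective n) w j
  refine ⟨i.castSucc, fun j hj => ?_, ?_⟩
  · obtain ⟨j, rfl⟩ := Fin.exists_castSucc_eq.2 (hj.trans (Fin.castSucc_lt_last i)).ne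
    have hwj : w j = 0 := by_contra fun h => hmin j h (Fin.castSucc_lt_castSucc_iff.1 hj)
    simp [hcast, hwj]
  · simpa [hcast, Nat.pos_iff_ne_zero] using hi

theorem evalExponent_single_last (k : ℕ) (i : Fin n) :
    evalExponent a b (Finsupp.single (Fin.last n) k) i = k * b i := by
  simp [evalExponent_apply, mul_comm]

theorem evalExponent_mapDomain_castSucc (w : Fin n →₀ ℕ) (i : Fin n) :
    evalExponent a b (w.mapDomain Fin.castSucc) i = a i * w i := by
  simp [evalExponent_apply, Finsupp.mapDomain_apply (Fin.castSucc_injective n),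
    Finsupp.mapDomain_of_notMem_range]

theorem mapDomain_castSucc_le_iff {w : Fin n →₀ ℕ} :
    w.mapDomain Fin.castSucc ≤ c ↔ ∀ i : Fin n, w i ≤ c i.castSucc := by
  simp [Finsupp.le_def, Fin.forall_fin_succ',
    Finsupp.mapDomain_apply (Fin.castSucc_injective n), Finsupp.mapDomain_of_notMem_range]

theorem evalExponent_single_last_le_evalExponent_ceilExponent (ha : ∀ i, 0 < a i) (k : ℕ) :
    evalExponent a b (Finsupp.single (Fin.last n) k) ≤
      evalExponent a b ((ceilExponent a b k).mapDomain Fin.castSucc) := by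
  intro i
  rw [evalExponent_single_last, evalExponent_mapDomain_castSucc]
  exact le_smul_ceilDiv (ha i)

theorem last_le_last_of_not_ceilExponent_le (ha : ∀ i, 0 < a i) {k : ℕ}
    (hk : IsLeast {k | 0 < k ∧ ∑ i, (k * b i) ⌈/⌉ a i ≤ k} k)
    (hc : ¬ (ceilExponent a b k).mapDomain Fin.castSucc ≤ c) (hdeg : c'.degree = c.degree)
    (hle : evalExponent a b c' ≤ evalExponent a b c) :
    c' (Fin.last n) ≤ c (Fin.last n) := by
  by_contra! hlt
  obtain ⟨j, hj⟩ := Nat.exists_eq_add_of_le hlt.le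
  have hkj : k ≤ j := hk.2 ⟨by omega, sum_ceilDiv_le_of_evalExponent_le ha hdeg hle hj⟩
  refine hc (mapDomain_castSucc_le_iff.2 fun i => ?_)
  calc (k * b i) ⌈/⌉ a i
      ≤ (j * b i) ⌈/⌉ a i := mul_ceilDiv_le_mul_ceilDiv (ha i) hkj
    _ ≤ c i.castSucc := le_of_add_le_left (ceilDiv_add_le_of_evalExponent_le ha hle hj i)

end Exponents

section Generator

variable {R : Type*} [CommRing R] [Nontrivial R] {n : ℕ} {a b : Fin n → ℕ}
  {J : Ideal (MvPolynomial (Fin (n + 1)) R)}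

theorem exists_monic_eq_span_of_ratioSum_le_one (ha : ∀ i, 0 < a i) (hb : b ≠ 0)
    (hs : ratioSum a b ≤ 1)
    (hJ : IsFiberConeIdeal (fun t => monomial (generatorExponent a b t) (1 : R)) J) :
    ∃ g, MonomialOrder.lex.Monic g ∧ J = Ideal.span {g} := by
  obtain ⟨k, hk⟩ : ∃ k, IsLeast {k | 0 < k ∧ ∑ i, (k * b i) ⌈/⌉ a i ≤ k} k :=
    ⟨_, Nat.sInf_mem (exists_sum_ceilDiv_le ha hs), fun _ => Nat.sInf_le⟩
  have hdeg : (ceilExponent a b k).degree = k :=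
    (Finsupp.degree_eq_sum _).trans (sum_ceilDiv_eq_of_isLeast ha hb hk)
  have hlex : Finsupp.single (Fin.last n) k ≺[MonomialOrder.lex]
      (ceilExponent a b k).mapDomain Fin.castSucc :=
    single_last_lex_lt_mapDomain_castSucc (fun h => hk.1.1.ne (by simpa [h] using hdeg)) k
  obtain ⟨t, hgJ⟩ : ∃ t : R, monomial ((ceilExponent a b k).mapDomain Fin.castSucc) 1 -
      monomial (Finsupp.single (Fin.last n) k) t ∈ J :=
    hJ.exists_monomial_sub_monomial_mem (by simp [hdeg])
      (evalExponent_single_last_le_evalExponent_ceilExponent ha k)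
  refine ⟨_, leadingCoeff_monomial_sub_monomial _ hlex t, hJ.eq_span_singleton _ hgJ
    (leadingCoeff_monomial_sub_monomial _ hlex t) ?_ ?_⟩ <;>
    rw [degree_monomial_sub_monomial _ hlex]
  · intro c c' hc hdeg hlt
    exact (last_lt_last_of_ratioSum_le_one ha hs hdeg hlt).not_ge
      (last_le_last_of_not_ceilExponent_le ha hk hc hdeg hlt.le)
  · intro c c' hc hc' hdeg heq
    exact eq_of_evalExponent_eq_of_last_eq ha heq
      ((last_le_last_of_not_ceilExponent_le ha hk hc hdeg heq.le).antisymm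
        (last_le_last_of_not_ceilExponent_le ha hk hc' hdeg.symm heq.ge))

theorem exists_monic_eq_span_of_one_lt_ratioSum (ha : ∀ i, 0 < a i) (hs : 1 < ratioSum a b)
    (hJ : IsFiberConeIdeal (fun t => monomial (generatorExponent a b t) (1 : R)) J) :
    ∃ g, MonomialOrder.lex.Monic g ∧ J = Ideal.span {g} := by
  classical
  obtain ⟨k, ⟨hkpos, hksum⟩, hkmin⟩ : ∃ k, IsLeast {k | 0 < k ∧ k ≤ ∑ i, k * b i / a i} k :=
    ⟨_, Nat.sInf_mem (exists_le_sum_div ha hs.le), fun _ => Nat.sInf_le⟩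
  obtain ⟨w, hw, hwdeg⟩ := Finsupp.exists_le_degree_eq
    (Finsupp.equivFunOnFinite.symm fun i => k * b i / a i) k
    (by rwa [Finsupp.degree_eq_sum])
  have hdeg : (w.mapDomain Fin.castSucc).degree = (Finsupp.single (Fin.last n) k).degree := by
    simp [hwdeg]
  have hlt : evalExponent a b (w.mapDomain Fin.castSucc) <
      evalExponent a b (Finsupp.single (Fin.last n) k) := by
    refine lt_of_le_of_ne (fun i => ?_) fun heq => ?_
    · rw [evalExponent_mapDomain_castSucc, evalExponent_single_last]
      exact (Nat.mul_le_mul_left _ (hw i)).trans (Nat.mul_div_le _ _)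
    · have := last_eq_last_of_ratioSum_ne_one ha hs.ne' hdeg heq
      simp [Finsupp.mapDomain_of_notMem_range, hkpos.ne] at this
  have hgJ := hJ.monomial_mem hdeg hlt 1
  refine ⟨_, MonomialOrder.lex.monic_monomial_one, hJ.eq_span_singleton _ hgJ
    MonomialOrder.lex.monic_monomial_one ?_ ?_⟩ <;>
    rw [MonomialOrder.degree_monomial, if_neg one_ne_zero]
  · intro c c' hc hdeg hlt
    have hlast := last_lt_last_of_one_lt_ratioSum ha hs hdeg hlt
    obtain ⟨j, hj⟩ := Nat.exists_eq_add_of_le hlast.le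
    have hkj : k ≤ j := hkmin ⟨by omega, le_sum_div_of_evalExponent_le ha hdeg hlt.le hj⟩
    exact hc (Finsupp.single_le_iff.2 (by omega))
  · intro c c' _ _ hdeg heq
    exact eq_of_evalExponent_eq_of_last_eq ha heq
      (last_eq_last_of_ratioSum_ne_one ha hs.ne' hdeg heq)

end Generator

theorem stmt_4_general {R : Type*} [CommRing R] [Nontrivial R] (n : ℕ)
    (a b : Fin n → ℕ) (ha : ∀ i, 0 < a i) (hb : b ≠ 0)
    (I mm : Ideal (MvPolynomial (Fin n) R))
    (hI : I = Ideal.span (Set.range (fun i => (X i : MvPolynomial (Fin n) R) ^ a i) ∪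
      {∏ i, (X i : MvPolynomial (Fin n) R) ^ b i}))
    (hmm : mm = Ideal.span (Set.range (X : Fin n → MvPolynomial (Fin n) R)))
    (u : Fin (n + 1) → MvPolynomial (Fin n) R)
    (hu : ∀ i : Fin n, u i.castSucc = X i ^ a i)
    (hulast : u (Fin.last n) = ∏ i, X i ^ b i)
    (J : Ideal (MvPolynomial (Fin (n + 1)) R))
    (hJ : ∀ f : MvPolynomial (Fin (n + 1)) R,
      f ∈ J ↔ ∀ d : ℕ, aeval u (homogeneousComponent d f) ∈ mm * I ^ d) :
    ∃ f : MvPolynomial (Fin (n + 1)) R, f ≠ 0 ∧ ¬ IsUnit f ∧ J = Ideal.span {f} := by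
  have hIu : I = Ideal.span (Set.range u) := by
    rw [hI]
    congr 1
    ext p
    simp only [Set.mem_union, Set.mem_range, Set.mem_singleton_iff, Fin.exists_fin_succ', hu,
      hulast, eq_comm]
  obtain rfl := eq_monomial_generatorExponent a b hu hulast
  subst hIu hmm
  have hJ : IsFiberConeIdeal _ J := hJ
  obtain ⟨g, hg, hspan⟩ : ∃ g, MonomialOrder.lex.Monic g ∧ J = Ideal.span {g} :=
    (le_or_gt (ratioSum a b) 1).elim
      (fun hs => exists_monic_eq_span_of_ratioSum_le_one ha hb hs hJ)
      (fun hs => exists_monic_eq_span_of_one_lt_ratioSum ha hs hJ)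
  refine ⟨g, hg.ne_zero, fun hunit => hJ.ne_top ?_, hspan⟩
  rw [hspan, Ideal.span_singleton_eq_top.2 hunit]

theorem stmt_4 {K : Type*} [Field K] (n : ℕ) (hn : 2 ≤ n)
    (a b : Fin n → ℕ) (hba : ∀ i, b i < a i) (hb : ∀ i, 0 < b i)
    (I mm : Ideal (MvPolynomial (Fin n) K))
    (hI : I = Ideal.span (Set.range (fun i => (X i : MvPolynomial (Fin n) K) ^ a i) ∪
      {∏ i, (X i : MvPolynomial (Fin n) K) ^ b i}))
    (hmm : mm = Ideal.span (Set.range (X : Fin n → MvPolynomial (Fin n) K)))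
    (u : Fin (n + 1) → MvPolynomial (Fin n) K)
    (hu : ∀ i : Fin n, u i.castSucc = X i ^ a i)
    (hulast : u (Fin.last n) = ∏ i, X i ^ b i)
    (J : Ideal (MvPolynomial (Fin (n + 1)) K))
    (hJ : ∀ f : MvPolynomial (Fin (n + 1)) K,
      f ∈ J ↔ ∀ d : ℕ, aeval u (homogeneousComponent d f) ∈ mm * I ^ d)
    :
    ∃ f : MvPolynomial (Fin (n + 1)) K, f ≠ 0 ∧ ¬ IsUnit f ∧ J = Ideal.span {f} := by
  exact stmt_4_general n a b (fun i => (hb i).trans (hba i))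
    (fun h => (hb ⟨0, by omega⟩).ne' (congrFun h _)) I mm hI hmm u hu hulast J hJ
end

section
/- The fiber cone F(I) = T/J has positive depth: there exists an element f of the ideal (z_1,z_2,z_3,z_4) of T whose image in T/J is a nonzerodivisor on T/J. -/
open MvPolynomial

/-!
Suppose that `x` and `y` are generators of `I`, homogeneous of different degrees, and that no
nonzero element of the fiber cone is killed by both. If `x + y` kills the class of `h`, compare
graded components: `x hₙ + y hₙ₊δ` is zero, where `δ` is the difference of the degrees, so starting
from the lowest components some power of `y` kills every `hₙ`. Now descend from the top component:
once `hₙ₊δ` is zero, `x` kills `hₙ`, and since a power of `y` does so too, `hₙ` is zero. Hence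
`x + y` is a nonzerodivisor.

For the symmetric ideal take `z₁ + z₄` when `c ≤ a + b` and `z₂ + z₃` when `a + b < c`. As `I` is
generated by monomials, it suffices to look at a monomial of the fiber cone killed by both summands.
Comparing degrees and weights, either it is already zero, or `c ≠ a + b` and it is divisible by the
product of the other two variables. That product vanishes: `z₁ z₄` and `z₂ z₃` take the values
`(xy) ^ c` and `(xy) ^ (a + b)`, and the one with the larger exponent is zero in the fiber cone.
-/

section GradedRing

open DirectSum

variable {A S : Type*}

section CommSemiring

variable [CommSemiring A] {I M : Ideal A} {x y h : A}

/-- No nonzero homogeneous element of `⊕ I ^ d / M I ^ d` is killed by the classes of both `x` and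
`y` in degree `1`. Stated with representatives `h ∈ I ^ d`, so that no quotient is formed. -/
def NoCommonAnnihilator (I M : Ideal A) (x y : A) : Prop :=
  ∀ d, ∀ h ∈ I ^ d, x * h ∈ M * I ^ (d + 1) → y * h ∈ M * I ^ (d + 1) → h ∈ M * I ^ d

theorem mul_mem_mul_pow_succ (hxI : x ∈ I) {d : ℕ} (hh : h ∈ M * I ^ d) :
    x * h ∈ M * I ^ (d + 1) := by
  rw [pow_succ', mul_left_comm]
  exact Ideal.mul_mem_mul hxI hh

theorem pow_mul_mem_mul_pow_add (hxI : x ∈ I) {d : ℕ} (hh : h ∈ M * I ^ d) (k : ℕ) :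
    x ^ k * h ∈ M * I ^ (d + k) := by
  rw [add_comm, pow_add, mul_left_comm]
  exact Ideal.mul_mem_mul (Ideal.pow_mem_pow hxI k) hh

theorem mem_mul_pow_of_pow_mul_mem (hyI : y ∈ I) (hann : NoCommonAnnihilator I M x y)
    (k : ℕ) {d : ℕ} (hh : h ∈ I ^ d) (hx : x * h ∈ M * I ^ (d + 1))
    (hy : y ^ k * h ∈ M * I ^ (d + k)) : h ∈ M * I ^ d := by
  induction k generalizing d h with
  | zero => simpa using hy
  | succ k ih =>
    have hyh : y * h ∈ I ^ (d + 1) := pow_succ' I d ▸ Ideal.mul_mem_mul hyI hh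
    have hxyh : x * (y * h) ∈ M * I ^ (d + 1 + 1) :=
      mul_left_comm x y h ▸ mul_mem_mul_pow_succ hyI hx
    refine hann d h hh hx (ih hyh hxyh ?_)
    rwa [← mul_assoc, ← pow_succ, add_assoc, add_comm 1]

variable [SetLike S A] [AddSubmonoidClass S A] {𝒜 : ℕ → S} [GradedRing 𝒜] {j δ : ℕ}

theorem isHomogeneous_pow (hI : I.IsHomogeneous 𝒜) (d : ℕ) : (I ^ d).IsHomogeneous 𝒜 := by
  induction d with
  | zero => simpa only [pow_zero, Ideal.one_eq_top] using Ideal.IsHomogeneous.top 𝒜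
  | succ d ih => exact pow_succ I d ▸ ih.mul hI

theorem mul_decompose_add_mul_decompose_mem {N : Ideal A} (hN : N.IsHomogeneous 𝒜)
    (hx : x ∈ 𝒜 (j + δ)) (hy : y ∈ 𝒜 j) (hxy : (x + y) * h ∈ N) (n : ℕ) :
    x * decompose 𝒜 h n + y * decompose 𝒜 h (n + δ) ∈ N := by
  have hcomp := hN (j + δ + n) hxy
  rwa [add_mul, decompose_add, DirectSum.add_apply, AddMemClass.coe_add,
    coe_decompose_mul_add_of_left_mem 𝒜 hx, add_assoc, add_comm δ,
    coe_decompose_mul_add_of_left_mem 𝒜 hy] at hcomp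

theorem mul_decompose_mem_of_lt {N : Ideal A} (hN : N.IsHomogeneous 𝒜)
    (hx : x ∈ 𝒜 (j + δ)) (hy : y ∈ 𝒜 j) (hxy : (x + y) * h ∈ N) {n : ℕ} (hn : n < δ) :
    y * decompose 𝒜 h n ∈ N := by
  have hcomp := hN (j + n) hxy
  rwa [add_mul, decompose_add, DirectSum.add_apply, AddMemClass.coe_add,
    coe_decompose_mul_of_left_mem_of_not_le 𝒜 hx (by lia), zero_add,
    coe_decompose_mul_add_of_left_mem 𝒜 hy] at hcomp

end CommSemiring

variable [CommRing A] {I M : Ideal A} {x y h : A}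
  [SetLike S A] [AddSubmonoidClass S A] {𝒜 : ℕ → S} [GradedRing 𝒜] {j δ : ℕ}

theorem pow_mul_decompose_mem (hI : I.IsHomogeneous 𝒜) (hM : M.IsHomogeneous 𝒜)
    (hx : x ∈ 𝒜 (j + δ)) (hy : y ∈ 𝒜 j) (hxI : x ∈ I) (hyI : y ∈ I) {d : ℕ}
    (hxy : (x + y) * h ∈ M * I ^ (d + 1)) (k n : ℕ) (hn : n < k * δ) :
    y ^ k * decompose 𝒜 h n ∈ M * I ^ (d + k) := by
  have hN : (M * I ^ (d + 1)).IsHomogeneous 𝒜 := hM.mul (isHomogeneous_pow hI _)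
  induction k generalizing n with
  | zero => simp at hn
  | succ k ih =>
    rw [← add_assoc, add_right_comm]
    rcases lt_or_ge n δ with hlt | hle
    · rw [pow_succ, mul_assoc]
      exact pow_mul_mem_mul_pow_add hyI (mul_decompose_mem_of_lt hN hx hy hxy hlt) k
    · obtain ⟨n, rfl⟩ := Nat.exists_eq_add_of_le' hle
      have hrel := pow_mul_mem_mul_pow_add hyI
        (mul_decompose_add_mul_decompose_mem hN hx hy hxy n) k
      have hprev := mul_mem_mul_pow_succ hxI (ih n (by grind))
      rw [add_right_comm] at hprev
      convert sub_mem hrel hprev using 1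
      ring

theorem decompose_mem_mul_pow_of_decompose_add_mem (hI : I.IsHomogeneous 𝒜)
    (hM : M.IsHomogeneous 𝒜) (hx : x ∈ 𝒜 (j + δ)) (hy : y ∈ 𝒜 j) (hδ : 0 < δ) (hxI : x ∈ I)
    (hyI : y ∈ I) (hann : NoCommonAnnihilator I M x y) {d : ℕ} (hh : h ∈ I ^ d)
    (hxy : (x + y) * h ∈ M * I ^ (d + 1)) {n : ℕ}
    (hnext : (decompose 𝒜 h (n + δ) : A) ∈ M * I ^ d) :
    (decompose 𝒜 h n : A) ∈ M * I ^ d := by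
  have hN : (M * I ^ (d + 1)).IsHomogeneous 𝒜 := hM.mul (isHomogeneous_pow hI _)
  refine mem_mul_pow_of_pow_mul_mem hyI hann (n + 1) (isHomogeneous_pow hI d n hh) ?_
    (pow_mul_decompose_mem hI hM hx hy hxI hyI hxy _ n (by nlinarith))
  rw [← add_sub_cancel_right (x * _) (y * (decompose 𝒜 h (n + δ) : A))]
  exact sub_mem (mul_decompose_add_mul_decompose_mem hN hx hy hxy n)
    (mul_mem_mul_pow_succ hyI hnext)

theorem mem_mul_pow_of_add_mul_mem {i : ℕ} (hI : I.IsHomogeneous 𝒜) (hM : M.IsHomogeneous 𝒜)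
    (hx : x ∈ 𝒜 i) (hy : y ∈ 𝒜 j) (hij : i ≠ j) (hxI : x ∈ I) (hyI : y ∈ I)
    (hann : NoCommonAnnihilator I M x y)
    {d : ℕ} (hh : h ∈ I ^ d) (hxy : (x + y) * h ∈ M * I ^ (d + 1)) : h ∈ M * I ^ d := by
  classical
  wlog hlt : j < i generalizing x y i j
  · exact this hy hx hij.symm hyI hxI (fun d h hh hy hx ↦ hann d h hh hx hy)
      (add_comm x y ▸ hxy) (by lia)
  obtain ⟨δ, rfl⟩ := Nat.exists_eq_add_of_lt hlt
  rw [add_assoc] at hx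
  rw [Ideal.IsHomogeneous.mem_iff 𝒜 (hM.mul (isHomogeneous_pow hI d))]
  obtain ⟨B, hB⟩ := (decompose 𝒜 h).support.bddAbove
  have hzero (n : ℕ) (hn : B < n) : (decompose 𝒜 h n : A) ∈ M * I ^ d := by
    have : decompose 𝒜 h n = 0 := DFinsupp.notMem_support_iff.mp fun hmem ↦ (hB hmem).not_gt hn
    simp [this]
  have hdescend (k n : ℕ) (hn : B < n + k) : (decompose 𝒜 h n : A) ∈ M * I ^ d := by
    induction k generalizing n with
    | zero => exact hzero n hn
    | succ k ih =>
      exact decompose_mem_mul_pow_of_decompose_add_mem hI hM hx hy δ.succ_pos hxI hyI hann hh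
        hxy (ih _ (by lia))
  exact fun n ↦ hdescend (B + 1) n (by lia)

end GradedRing

section MonomialIdeals

open Finsupp

variable {ι σ R : Type*} [CommSemiring R] (e : ι → σ →₀ ℕ)

theorem prod_monomial_one_pow (α : ι →₀ ℕ) :
    (α.prod fun i k ↦ monomial (e i) (1 : R) ^ k) = monomial (weight e α) 1 := by
  simp only [monomial_pow, one_pow, weight_apply, Finsupp.prod, Finsupp.sum, monomial_sum_one]

theorem span_monomial_pow (d : ℕ) :
    Ideal.span (Set.range fun i ↦ monomial (e i) (1 : R)) ^ d =
      Ideal.span ((monomial · 1) '' (weight e '' {α | α.degree = d})) := by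
  rw [Ideal.span, Submodule.span_pow, ← Set.image_univ, image_pow_eq_finsuppProd_image]
  simp [prod_monomial_one_pow, Set.image_image]

theorem mem_span_monomial_pow_iff {d : ℕ} {h : MvPolynomial σ R} :
    h ∈ Ideal.span (Set.range fun i ↦ monomial (e i) (1 : R)) ^ d ↔
      ∀ m ∈ h.support, ∃ α : ι →₀ ℕ, α.degree = d ∧ weight e α ≤ m := by
  rw [span_monomial_pow, mem_ideal_span_monomial_image]
  simp

theorem exists_single_one_add_le_iff_lt {m n : σ →₀ ℕ} :
    (∃ s, single s 1 + m ≤ n) ↔ m < n := by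
  constructor
  · rintro ⟨s, hs⟩
    exact lt_of_lt_of_le (lt_add_of_pos_left m (by simp [pos_iff_ne_zero])) hs
  · intro hlt
    obtain ⟨k, rfl⟩ := exists_add_of_le hlt.le
    obtain ⟨s, hs⟩ := Finsupp.ne_iff.mp (pos_of_lt_add_right hlt).ne'
    refine ⟨s, ?_⟩
    rw [add_comm m]
    gcongr
    exact single_le_iff.mpr (Nat.one_le_iff_ne_zero.mpr hs)

open scoped Pointwise in
theorem span_monomial_mul_span_monomial (E F : Set (σ →₀ ℕ)) :
    Ideal.span ((monomial · (1 : R)) '' E) * Ideal.span ((monomial · 1) '' F) =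
      Ideal.span ((monomial · 1) '' (E + F)) := by
  rw [Ideal.span_mul_span', ← Set.image2_add, ← Set.image2_mul,
    Set.image_image2_distrib (f' := (· * ·)) (g₁ := (monomial · 1)) (g₂ := (monomial · 1))
      fun m n ↦ by rw [monomial_mul, one_mul]]

open scoped Pointwise in
theorem mem_idealOfVars_mul_span_monomial_pow_iff {d : ℕ} {h : MvPolynomial σ R} :
    h ∈ idealOfVars σ R * Ideal.span (Set.range fun i ↦ monomial (e i) (1 : R)) ^ d ↔
      ∀ m ∈ h.support, ∃ α : ι →₀ ℕ, α.degree = d ∧ weight e α < m := by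
  have hvars : Set.range (X : σ → MvPolynomial σ R) =
      (monomial · 1) '' (Set.range fun s ↦ single s 1) := by rw [← Set.range_comp]; rfl
  rw [span_monomial_pow, idealOfVars, hvars, span_monomial_mul_span_monomial,
    mem_ideal_span_monomial_image]
  refine forall₂_congr fun m _ ↦ ?_
  simp only [← exists_single_one_add_le_iff_lt]
  constructor
  · rintro ⟨_, ⟨_, ⟨s, rfl⟩, _, ⟨α, hα, rfl⟩, rfl⟩, hle⟩
    exact ⟨α, hα, s, hle⟩
  · rintro ⟨α, hα, s, hle⟩
    exact ⟨_, Set.add_mem_add ⟨s, rfl⟩ ⟨α, hα, rfl⟩, hle⟩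

attribute [local instance] weightedGradedAlgebra in
theorem isHomogeneous_span_monomial (w : σ → ℕ) :
    (Ideal.span (Set.range fun i ↦ monomial (e i) (1 : R))).IsHomogeneous
      (weightedHomogeneousSubmodule R w) := by
  refine Ideal.homogeneous_span _ _ ?_
  rintro _ ⟨i, rfl⟩
  exact ⟨_, isWeightedHomogeneous_monomial w (e i) 1 rfl⟩

end MonomialIdeals

section HomogeneousPolynomials

variable {ι R A : Type*}

attribute [local instance] gradedAlgebra in
theorem homogeneousComponent_add_mul [CommSemiring R] {f : MvPolynomial ι R} {k : ℕ}
    (hf : f.IsHomogeneous k) (g : MvPolynomial ι R) (d : ℕ) :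
    homogeneousComponent (k + d) (f * g) = f * homogeneousComponent d g := by
  simp_rw [← decomposition.decompose'_apply]
  exact DirectSum.coe_decompose_mul_add_of_left_mem (homogeneousSubmodule ι R) hf

theorem aeval_mem_span_range_pow [CommSemiring R] [CommSemiring A] [Algebra R A] (u : ι → A)
    {d : ℕ} {f : MvPolynomial ι R} (hf : f.IsHomogeneous d) :
    aeval u f ∈ Ideal.span (Set.range u) ^ d := by
  rw [Ideal.mem_span_pow_iff_exists_isHomogeneous]
  exact ⟨map (algebraMap R A) f, hf.map _, by rw [eval_map, aeval_def]⟩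

end HomogeneousPolynomials

section FiberCone

open Finsupp

variable {ι σ : Type*} {e : ι → σ →₀ ℕ} {α γ : ι →₀ ℕ} {x y : ι}

/-- The monomial `z ^ α` is zero in the fiber cone of the ideal generated by the monomials with
exponents `e i`: some monomial of the same degree in these generators properly divides the value
of `z ^ α` at them. -/
def VanishesInFiberCone (e : ι → σ →₀ ℕ) (α : ι →₀ ℕ) : Prop :=
  ∃ β : ι →₀ ℕ, β.degree = α.degree ∧ weight e β < weight e α

theorem VanishesInFiberCone.mono (hγ : VanishesInFiberCone e γ) (hle : γ ≤ α) :
    VanishesInFiberCone e α := by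
  obtain ⟨β, hdeg, hlt⟩ := hγ
  obtain ⟨α, rfl⟩ := exists_add_of_le hle
  exact ⟨β + α, by simp [hdeg], by simpa using hlt⟩

theorem VanishesInFiberCone.of_add_single
    (hα : VanishesInFiberCone e (α + single x 1)) : VanishesInFiberCone e α ∨
      ∃ β : ι →₀ ℕ, β x = 0 ∧ β.degree = (α + single x 1).degree ∧
        weight e β < weight e (α + single x 1) := by
  obtain ⟨β, hdeg, hlt⟩ := hα
  refine or_iff_not_imp_right.mpr fun hβ ↦ ?_
  have hx : single x 1 ≤ β :=
    single_le_iff.mpr (Nat.one_le_iff_ne_zero.mpr fun hx ↦ hβ ⟨β, hx, hdeg, hlt⟩)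
  obtain ⟨β, rfl⟩ := le_iff_exists_add'.mp hx
  exact ⟨β, by simpa using hdeg, by simpa using hlt⟩

theorem noCommonAnnihilator_of_vanishesInFiberCone {R : Type*} [CommSemiring R]
    (hxy : ∀ α, VanishesInFiberCone e (α + single x 1) → VanishesInFiberCone e (α + single y 1) →
      VanishesInFiberCone e α) :
    NoCommonAnnihilator (Ideal.span (Set.range fun i ↦ monomial (e i) (1 : R))) (idealOfVars σ R)
      (monomial (e x) 1) (monomial (e y) 1) := by
  intro d h hh hxh hyh
  rw [mem_idealOfVars_mul_span_monomial_pow_iff] at hxh hyh ⊢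
  intro m hm
  obtain ⟨α, rfl, hle⟩ := (mem_span_monomial_pow_iff e).mp hh m hm
  rcases hle.lt_or_eq with hlt | rfl
  · exact ⟨α, rfl, hlt⟩
  have hsupport (z : ι) : weight e (α + single z 1) ∈ (monomial (e z) (1 : R) * h).support := by
    rw [MvPolynomial.mem_support_iff] at hm ⊢
    rwa [map_add, weight_single, one_smul, add_comm, coeff_monomial_mul, one_mul]
  exact hxy α (by simpa [VanishesInFiberCone] using hxh _ (hsupport x))
    (by simpa [VanishesInFiberCone] using hyh _ (hsupport y))

variable {R : Type*} [CommRing R]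

theorem mem_idealOfVars_mul_span_monomial_pow_of_add_mul_mem (hne : e x ≠ e y)
    (hxy : ∀ α, VanishesInFiberCone e (α + single x 1) → VanishesInFiberCone e (α + single y 1) →
      VanishesInFiberCone e α) {d : ℕ} {h : MvPolynomial σ R}
    (hh : h ∈ Ideal.span (Set.range fun i ↦ monomial (e i) (1 : R)) ^ d)
    (hadd : (monomial (e x) 1 + monomial (e y) 1) * h ∈
      idealOfVars σ R * Ideal.span (Set.range fun i ↦ monomial (e i) (1 : R)) ^ (d + 1)) :
    h ∈ idealOfVars σ R * Ideal.span (Set.range fun i ↦ monomial (e i) (1 : R)) ^ d := by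
  classical
  obtain ⟨s, hs⟩ := Finsupp.ne_iff.mp hne
  let w : σ → ℕ := Pi.single s 1
  let := weightedGradedAlgebra R w
  have hmem (z : ι) : monomial (e z) 1 ∈ weightedHomogeneousSubmodule R w (e z s) :=
    isWeightedHomogeneous_monomial w (e z) 1 (weight_single_one_apply s (e z))
  exact mem_mul_pow_of_add_mul_mem (isHomogeneous_span_monomial e w)
    (isHomogeneous_span_monomial (σ := σ) (fun t ↦ single t 1) w) (hmem x) (hmem y) hs
    (Ideal.subset_span (Set.mem_range_self x)) (Ideal.subset_span (Set.mem_range_self y))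
    (noCommonAnnihilator_of_vanishesInFiberCone hxy) hh hadd

/-- The property defining the ideal `J` of relations of the fiber cone of an ideal of a polynomial
ring, presented by the generators `u i`. -/
def IsFiberConeRelationIdeal (u : ι → MvPolynomial σ R) (J : Ideal (MvPolynomial ι R)) : Prop :=
  ∀ f, f ∈ J ↔
    ∀ d, aeval u (homogeneousComponent d f) ∈ idealOfVars σ R * Ideal.span (Set.range u) ^ d

theorem IsFiberConeRelationIdeal.mem_of_X_add_X_mul_mem {J : Ideal (MvPolynomial ι R)}
    (hJ : IsFiberConeRelationIdeal (fun i ↦ monomial (e i) 1) J) (hne : e x ≠ e y)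
    (hxy : ∀ α, VanishesInFiberCone e (α + single x 1) → VanishesInFiberCone e (α + single y 1) →
      VanishesInFiberCone e α) {g : MvPolynomial ι R} (hg : (X x + X y) * g ∈ J) : g ∈ J := by
  refine (hJ g).mpr fun d ↦ mem_idealOfVars_mul_span_monomial_pow_of_add_mul_mem hne hxy
    (aeval_mem_span_range_pow _ (homogeneousComponent_isHomogeneous d g)) ?_
  have hmem := (hJ _).mp hg (1 + d)
  rwa [homogeneousComponent_add_mul ((isHomogeneous_X R x).add (isHomogeneous_X R y)), map_mul,
    map_add, aeval_X, aeval_X, add_comm 1] at hmem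

end FiberCone

section SymmetricExponents

open Finsupp

/-- The exponents `(c, 0)`, `(b, a)`, `(a, b)`, `(0, c)` of the generators of the symmetric ideal
`(x ^ c, x ^ b y ^ a, x ^ a y ^ b, y ^ c)`. -/
noncomputable def symmetricExponent (a b c : ℕ) : Fin 4 → Fin 2 →₀ ℕ :=
  ![single 0 c, single 0 b + single 1 a, single 0 a + single 1 b, single 1 c]

variable {a b c : ℕ}

theorem weight_symmetricExponent_apply_zero (α : Fin 4 →₀ ℕ) :
    weight (symmetricExponent a b c) α 0 = c * α 0 + b * α 1 + a * α 2 := by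
  simp [weight_eq_sum, Fin.sum_univ_four, symmetricExponent, mul_comm]

theorem weight_symmetricExponent_apply_one (α : Fin 4 →₀ ℕ) :
    weight (symmetricExponent a b c) α 1 = a * α 1 + b * α 2 + c * α 3 := by
  simp [weight_eq_sum, Fin.sum_univ_four, symmetricExponent, mul_comm]

theorem single_add_single_le_of_pos {ι : Type*} {α : ι →₀ ℕ} {x y : ι} (hne : x ≠ y)
    (hx : 0 < α x) (hy : 0 < α y) : single x 1 + single y 1 ≤ α := by
  classical
  intro i
  grind [Finsupp.add_apply]

theorem finsupp_fin_two_lt_iff {m n : Fin 2 →₀ ℕ} :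
    m < n ↔ m 0 ≤ n 0 ∧ m 1 ≤ n 1 ∧ m 0 + m 1 < n 0 + n 1 := by
  rw [lt_iff_le_not_ge, Finsupp.le_def, Finsupp.le_def, Fin.forall_fin_two, Fin.forall_fin_two]
  lia

theorem pos_and_lt_add_of_degree_eq_of_weight_le {i j k l j' k' l' : ℕ} (hab : a ≤ b) (hac : a < c)
    (hcab : c ≤ a + b) (hdeg : j' + k' + l' = i + j + k + l + 1)
    (hle : a * j' + b * k' + c * l' ≤ a * j + b * k + c * l)
    (hlt : (a + b) * (j' + k') + c * l' < c * (i + 1) + (a + b) * (j + k) + c * l) :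
    0 < k ∧ c < a + b := by
  obtain ⟨e, he⟩ := Nat.exists_eq_add_of_le hcab
  have hmul : e * (j' + k') < e * (j + k) := by
    rw [he] at hlt
    have hdeg_mul := congrArg (c * ·) hdeg
    grind
  have he_pos : 0 < e := Nat.pos_of_ne_zero fun h ↦ by simp [h] at hmul
  have hjk : j' + k' < j + k := lt_of_mul_lt_mul_left' hmul
  refine ⟨Nat.pos_of_ne_zero fun hk ↦ ?_, by lia⟩
  subst hk
  obtain ⟨p, rfl⟩ : ∃ p, l' = l + i + 2 + p := Nat.exists_eq_add_of_le (by lia)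
  obtain rfl : j = j' + k' + p + 1 := by lia
  nlinarith [Nat.mul_le_mul_right k' hab, Nat.mul_le_mul_right (p + 1) hac.le, Nat.zero_le (c * i)]

theorem pos_of_degree_eq_of_weight_le {i j k l i' k' l' : ℕ} (hab : a < b) (habc : a + b < c)
    (hdeg : i' + k' + l' = i + j + k + l + 1)
    (hle : b * k' + c * l' ≤ a * (j + 1) + b * k + c * l)
    (hlt : c * (i' + l') + (a + b) * k' < c * (i + l) + (a + b) * (j + k + 1)) :
    0 < l := by
  obtain ⟨e, rfl⟩ := Nat.exists_eq_add_of_le habc.le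
  have hmul : e * (i' + l') < e * (i + l) := by
    have hdeg_mul := congrArg ((a + b) * ·) hdeg
    grind
  have hil : i' + l' < i + l := lt_of_mul_lt_mul_left' hmul
  refine Nat.pos_of_ne_zero fun hl ↦ ?_
  subst hl
  obtain ⟨p, rfl⟩ : ∃ p, k' = j + k + 2 + p := Nat.exists_eq_add_of_le (by lia)
  nlinarith [Nat.mul_le_mul_right (j + 1) hab.le, Nat.zero_le (b * p)]

theorem vanishesInFiberCone_single_one_add_single_two (h : c < a + b) :
    VanishesInFiberCone (symmetricExponent a b c) (single 1 1 + single 2 1) :=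
  ⟨single 0 1 + single 3 1, by simp, by
    simp only [finsupp_fin_two_lt_iff, weight_symmetricExponent_apply_zero,
      weight_symmetricExponent_apply_one, Finsupp.add_apply, single_apply, Fin.reduceEq, ↓reduceIte]
    lia⟩

theorem vanishesInFiberCone_single_zero_add_single_three (h : a + b < c) :
    VanishesInFiberCone (symmetricExponent a b c) (single 0 1 + single 3 1) :=
  ⟨single 1 1 + single 2 1, by simp, by
    simp only [finsupp_fin_two_lt_iff, weight_symmetricExponent_apply_zero,
      weight_symmetricExponent_apply_one, Finsupp.add_apply, single_apply, Fin.reduceEq, ↓reduceIte]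
    lia⟩

variable {α : Fin 4 →₀ ℕ}

theorem vanishesInFiberCone_of_add_single_zero_of_add_single_three (hab : a ≤ b) (hac : a < c)
    (hcab : c ≤ a + b) (h₀ : VanishesInFiberCone (symmetricExponent a b c) (α + single 0 1))
    (h₃ : VanishesInFiberCone (symmetricExponent a b c) (α + single 3 1)) :
    VanishesInFiberCone (symmetricExponent a b c) α := by
  rcases h₀.of_add_single with h | ⟨β, hβ, hβdeg, hβlt⟩
  · exact h
  rcases h₃.of_add_single with h | ⟨γ, hγ, hγdeg, hγlt⟩
  · exact h
  simp only [degree_eq_sum, Fin.sum_univ_four, finsupp_fin_two_lt_iff, Finsupp.add_apply,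
    weight_symmetricExponent_apply_zero, weight_symmetricExponent_apply_one, single_apply,
    Fin.reduceEq, ↓reduceIte, hβ, hγ] at hβdeg hβlt hγdeg hγlt
  have ⟨h₂, hc⟩ : 0 < α 2 ∧ c < a + b :=
    pos_and_lt_add_of_degree_eq_of_weight_le (i := α 0) (j := α 1) (l := α 3) hab hac hcab
      (by lia) hβlt.2.1 (by linarith)
  have h₁ : 0 < α 1 :=
    (pos_and_lt_add_of_degree_eq_of_weight_le (i := α 3) (j := α 2) (l := α 0) (j' := γ 2)
      (k' := γ 1) (l' := γ 0) hab hac hcab (by lia) (by linarith) (by linarith)).1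
  exact (vanishesInFiberCone_single_one_add_single_two hc).mono
    (single_add_single_le_of_pos (by decide) h₁ h₂)

theorem vanishesInFiberCone_of_add_single_one_of_add_single_two (hab : a < b) (habc : a + b < c)
    (h₁ : VanishesInFiberCone (symmetricExponent a b c) (α + single 1 1))
    (h₂ : VanishesInFiberCone (symmetricExponent a b c) (α + single 2 1)) :
    VanishesInFiberCone (symmetricExponent a b c) α := by
  rcases h₁.of_add_single with h | ⟨β, hβ, hβdeg, hβlt⟩
  · exact h
  rcases h₂.of_add_single with h | ⟨γ, hγ, hγdeg, hγlt⟩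
  · exact h
  simp only [degree_eq_sum, Fin.sum_univ_four, finsupp_fin_two_lt_iff, Finsupp.add_apply,
    weight_symmetricExponent_apply_zero, weight_symmetricExponent_apply_one, single_apply,
    Fin.reduceEq, ↓reduceIte, hβ, hγ] at hβdeg hβlt hγdeg hγlt
  have h₃ : 0 < α 3 :=
    pos_of_degree_eq_of_weight_le (i := α 0) (j := α 1) (k := α 2) (i' := β 0) (k' := β 2)
      (l' := β 3) hab habc (by lia) (by linarith) (by linarith)
  have h₀ : 0 < α 0 :=
    pos_of_degree_eq_of_weight_le (i := α 3) (j := α 2) (k := α 1) (i' := γ 3) (k' := γ 1)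
      (l' := γ 0) hab habc (by lia) (by linarith) (by linarith)
  exact (vanishesInFiberCone_single_zero_add_single_three habc).mono
    (single_add_single_le_of_pos (by decide) h₀ h₃)

end SymmetricExponents

theorem IsFiberConeRelationIdeal.exists_X_add_X_mul_mem_imp {R : Type*} [CommRing R] {a b c : ℕ}
    (hab : a < b) (hac : a < c) {J : Ideal (MvPolynomial (Fin 4) R)}
    (hJ : IsFiberConeRelationIdeal (fun i ↦ monomial (symmetricExponent a b c i) 1) J) :
    ∃ x y : Fin 4, ∀ g, (X x + X y) * g ∈ J → g ∈ J := by
  rcases le_or_gt c (a + b) with hcab | habc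
  · have hne : symmetricExponent a b c 0 ≠ symmetricExponent a b c 3 :=
      Finsupp.ne_iff.mpr ⟨0, by simpa [symmetricExponent] using (by lia : c ≠ 0)⟩
    exact ⟨0, 3, fun g ↦ hJ.mem_of_X_add_X_mul_mem hne fun α ↦
      vanishesInFiberCone_of_add_single_zero_of_add_single_three hab.le hac hcab⟩
  · have hne : symmetricExponent a b c 1 ≠ symmetricExponent a b c 2 :=
      Finsupp.ne_iff.mpr ⟨0, by simpa [symmetricExponent] using hab.ne'⟩
    exact ⟨1, 2, fun g ↦ hJ.mem_of_X_add_X_mul_mem hne fun α ↦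
      vanishesInFiberCone_of_add_single_one_of_add_single_two hab habc⟩

theorem stmt_15_general {R : Type*} [CommRing R] (a b c : ℕ) (hab : a < b) (hac : a < c)
    (u : Fin 4 → MvPolynomial (Fin 2) R)
    (hu0 : u 0 = X 0 ^ c) (hu1 : u 1 = X 0 ^ b * X 1 ^ a)
    (hu2 : u 2 = X 0 ^ a * X 1 ^ b) (hu3 : u 3 = X 1 ^ c)
    (I mm : Ideal (MvPolynomial (Fin 2) R))
    (hI : I = Ideal.span {u 0, u 1, u 2, u 3})
    (hmm : mm = Ideal.span {(X 0 : MvPolynomial (Fin 2) R), X 1})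
    (J : Ideal (MvPolynomial (Fin 4) R))
    (hJ : ∀ f : MvPolynomial (Fin 4) R,
      f ∈ J ↔ ∀ d : ℕ, aeval u (homogeneousComponent d f) ∈ mm * I ^ d) :
    ∃ f : MvPolynomial (Fin 4) R,
      f ∈ Ideal.span {(X 0 : MvPolynomial (Fin 4) R), X 1, X 2, X 3} ∧
      ∀ g : MvPolynomial (Fin 4) R ⧸ J,
        Ideal.Quotient.mk J f * g = 0 → g = 0 := by
  have hu : u = fun i ↦ monomial (symmetricExponent a b c i) 1 := by
    funext i
    fin_cases i <;> simp [hu0, hu1, hu2, hu3, symmetricExponent, X_pow_eq_monomial, monomial_mul]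
  have hI_range : I = Ideal.span (Set.range u) := by
    rw [hI]
    congr 1
    ext
    simp [Fin.exists_fin_succ, eq_comm]
  have hmm_vars : mm = idealOfVars (Fin 2) R := by
    rw [hmm, idealOfVars]
    congr 1
    ext
    simp [Fin.exists_fin_two, eq_comm]
  have hrel : IsFiberConeRelationIdeal u J := by rwa [hI_range, hmm_vars] at hJ
  obtain ⟨x, y, hxy⟩ := (hu ▸ hrel).exists_X_add_X_mul_mem_imp hab hac
  have hX (i : Fin 4) : X i ∈ Ideal.span {(X 0 : MvPolynomial (Fin 4) R), X 1, X 2, X 3} := by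
    fin_cases i <;> exact Ideal.subset_span (by simp)
  refine ⟨X x + X y, add_mem (hX x) (hX y), fun g hg ↦ ?_⟩
  obtain ⟨g, rfl⟩ := Ideal.Quotient.mk_surjective g
  rw [← map_mul, Ideal.Quotient.eq_zero_iff_mem] at hg
  exact Ideal.Quotient.eq_zero_iff_mem.mpr (hxy g hg)

theorem stmt_15 {K : Type*} [Field K] (a b c : ℕ)
    (ha : 0 < a) (hab : a < b) (hbc : b < c)
    (hgcd : Nat.gcd a (Nat.gcd b c) = 1)
    (u : Fin 4 → MvPolynomial (Fin 2) K)
    (hu0 : u 0 = X 0 ^ c) (hu1 : u 1 = X 0 ^ b * X 1 ^ a)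
    (hu2 : u 2 = X 0 ^ a * X 1 ^ b) (hu3 : u 3 = X 1 ^ c)
    (I mm : Ideal (MvPolynomial (Fin 2) K))
    (hI : I = Ideal.span {u 0, u 1, u 2, u 3})
    (hmm : mm = Ideal.span {(X 0 : MvPolynomial (Fin 2) K), X 1})
    (J : Ideal (MvPolynomial (Fin 4) K))
    (hJ : ∀ f : MvPolynomial (Fin 4) K,
      f ∈ J ↔ ∀ d : ℕ, aeval u (homogeneousComponent d f) ∈ mm * I ^ d)
    :
    ∃ f : MvPolynomial (Fin 4) K,
      f ∈ Ideal.span {(X 0 : MvPolynomial (Fin 4) K), X 1, X 2, X 3} ∧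
      ∀ g : MvPolynomial (Fin 4) K ⧸ J,
        Ideal.Quotient.mk J f * g = 0 → g = 0 :=
  stmt_15_general a b c hab (hab.trans hbc) u hu0 hu1 hu2 hu3 I mm hI hmm J hJ
end

section
/- The following are equivalent: (a) F(I) = T/J is Cohen–Macaulay, in the sense that there exist elements f, g of the ideal (z_1,z_2,z_3,z_4) of T whose images form a regular sequence of length 2 on T/J; (b) J can be generated by at most 3 elements, i.e. there is a finite set G ⊆ T with |G| ≤ 3 and J = (G); (c) J can be generated by exactly 3 elements, i.e. there is a finite set G ⊆ T with |G| = 3 and J = (G). -/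
set_option synthInstance.maxHeartbeats 1000000
set_option maxHeartbeats 1000000
open MvPolynomial

/-!
The ideal `J` is spanned by the monomials whose value lies in `𝔪 I ^ d` and by the differences of
two monomials of the same degree and the same value.

If `c ≠ a + b`, then three minimal generators of `J` are monomials: `z₂ z₃, z₂ ^ r, z₃ ^ r` when
`c < a + b`, and `z₁ z₄, z₁ ^ n z₃ ^ m, z₂ ^ m z₄ ^ n` when `c > a + b`. The ideal `L` that they
generate has a Cohen–Macaulay quotient and agrees with `J` modulo two parameters `p, q`, namely
`z₁, z₄` and `z₁ + z₃, z₂ + z₄` respectively. If `T / J` is Cohen–Macaulay, then `p, q` is a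
regular sequence on it, so `J = L + (p, q) J`, and `J = L` by the graded Nakayama lemma. If `J` is
generated by three elements, then `J = L` because three minimal generators already lie in `L`.

If `c = a + b`, then `J` is the ideal of a projective monomial curve. For `b = a + 1` the quotient
is free over `K[z₁, z₄]` and `J` is generated by three binomials. For `b > a + 1` there are four
minimal binomial generators, and
`z₂ ^ (a + 1) z₄ ^ (b - a - 1) - z₁ z₃ ^ (b - 1) ∈ J` shows that `z₄` is a zero divisor modulo
`J + (z₁)`.
-/

namespace FiberCone

open RingTheory.Sequence
open scoped Pointwise

attribute [local instance] gradedAlgebra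

section RegularPairs

variable {A : Type*} [CommRing A] {f g p q : A}

lemma isWeaklyRegular_pair_iff :
    IsWeaklyRegular A [f, g] ↔ (∀ h, f * h = 0 → h = 0) ∧ ∀ h, f ∣ g * h → f ∣ h := by
  have mem_smul_top (h : A) : h ∈ f • (⊤ : Submodule A A) ↔ f ∣ h := by
    simp [Submodule.mem_smul_pointwise_iff_exists, dvd_iff_exists_eq_mul_right, eq_comm]
  have regular_quot : IsSMulRegular (QuotSMulTop f A) g ↔ ∀ h, f ∣ g * h → f ∣ h := by
    simp only [QuotSMulTop, isSMulRegular_quotient_iff_mem_of_smul_mem, smul_eq_mul, mem_smul_top]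
  rw [isWeaklyRegular_cons_iff, isWeaklyRegular_singleton_iff, regular_quot,
    isSMulRegular_iff_right_eq_zero_of_smul]
  rfl

lemma mem_of_pow_mul_mem {I : Ideal A} (hf : ∀ h, f * h ∈ I → h ∈ I) (n : ℕ) {h : A}
    (hh : f ^ n * h ∈ I) : h ∈ I := by
  induction n with
  | zero => simpa using hh
  | succ n ih => exact ih (hf _ (by rwa [← mul_assoc, ← pow_succ']))

lemma pow_dvd_of_pow_dvd_pow_mul (hfg : IsWeaklyRegular A [f, g]) {M N : ℕ} {h : A}
    (hh : f ^ M ∣ g ^ N * h) : f ^ M ∣ h := by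
  obtain ⟨hf, hg⟩ := isWeaklyRegular_pair_iff.1 hfg
  have dvd_of_dvd_mul (M : ℕ) : ∀ h, f ^ M ∣ g * h → f ^ M ∣ h := by
    induction M with
    | zero => simp
    | succ M ih =>
      rintro h ⟨k, hk⟩
      obtain ⟨h', rfl⟩ := hg h ⟨f ^ M * k, by rw [hk]; ring⟩
      have : g * h' = f ^ M * k := sub_eq_zero.1 (hf _ (by linear_combination hk))
      rw [pow_succ']
      exact mul_dvd_mul_left f (ih h' ⟨k, this⟩)
  simp only [← Ideal.mem_span_singleton] at dvd_of_dvd_mul hh ⊢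
  exact mem_of_pow_mul_mem (dvd_of_dvd_mul M) N hh

/- This is the vanishing of the first local cohomology at `(f, g)`, computed by the Čech complex
of `p, q`. -/
lemma exists_mul_eq_and_mul_eq (hfg : IsWeaklyRegular A [f, g])
    (hf : f ∈ (Ideal.span {p, q}).radical) (hg : g ∈ (Ideal.span {p, q}).radical)
    {h k : A} (hk : q * h = p * k) : ∃ v, p * v = h ∧ q * v = k := by
  obtain ⟨M, hM⟩ := hf
  obtain ⟨N, hN⟩ := hg
  obtain ⟨s, t, hst⟩ := Ideal.mem_span_pair.1 hM
  obtain ⟨s', t', hst'⟩ := Ideal.mem_span_pair.1 hN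
  obtain ⟨v, hv⟩ : f ^ M ∣ s * h + t * k := by
    refine pow_dvd_of_pow_dvd_pow_mul hfg (N := N) ⟨s' * h + t' * k, ?_⟩
    rw [← hst, ← hst']
    linear_combination (s * t' - t * s') * hk
  have cancel {x y : A} (hxy : f ^ M * x = f ^ M * y) : x = y :=
    sub_eq_zero.1 (mem_of_pow_mul_mem (I := ⊥) (isWeaklyRegular_pair_iff.1 hfg).1 M
      (by rw [mul_sub, hxy, sub_self, Ideal.mem_bot]))
  refine ⟨v, cancel ?_, cancel ?_⟩
  · rw [← hst] at hv ⊢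
    linear_combination -p * hv - t * hk
  · rw [← hst] at hv ⊢
    linear_combination -q * hv + s * hk

lemma isWeaklyRegular_pair_of_mem_radical (hfg : IsWeaklyRegular A [f, g])
    (hf : f ∈ (Ideal.span {p, q}).radical) (hg : g ∈ (Ideal.span {p, q}).radical)
    (hq : ∀ h, (∀ n, q ^ n ∣ h) → h = 0) : IsWeaklyRegular A [p, q] := by
  refine isWeaklyRegular_pair_iff.2 ⟨fun h hh ↦ hq h fun n ↦ ?_, ?_⟩
  · induction n generalizing h with
    | zero => simp
    | succ n ih =>
      obtain ⟨v, hpv, rfl⟩ :=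
        exists_mul_eq_and_mul_eq hfg hf hg (h := 0) (k := h) (by rw [hh, mul_zero])
      rw [pow_succ']
      exact mul_dvd_mul_left q (ih v hpv)
  · rintro h ⟨k, hk⟩
    obtain ⟨v, rfl, -⟩ := exists_mul_eq_and_mul_eq hfg hf hg hk
    exact dvd_mul_right p v

end RegularPairs

section Quotients

variable {R : Type*} [CommRing R] {I J : Ideal R} {p q : R}

lemma mk_dvd_mk_iff {h : R} :
    Ideal.Quotient.mk J p ∣ Ideal.Quotient.mk J h ↔ h ∈ J ⊔ Ideal.span {p} := by
  rw [← Ideal.mem_span_singleton, ← Set.image_singleton, ← Ideal.map_span,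
    Ideal.mem_quotient_iff_mem_sup, sup_comm]

lemma isWeaklyRegular_mk_pair_iff :
    IsWeaklyRegular (R ⧸ J) [Ideal.Quotient.mk J p, Ideal.Quotient.mk J q] ↔
      (∀ h, p * h ∈ J → h ∈ J) ∧
        ∀ h, q * h ∈ J ⊔ Ideal.span {p} → h ∈ J ⊔ Ideal.span {p} := by
  simp only [isWeaklyRegular_pair_iff, Ideal.Quotient.mk_surjective.forall, ← map_mul,
    mk_dvd_mk_iff, Ideal.Quotient.eq_zero_iff_mem]

lemma isRegular_mk_pair_of_mem {m : Ideal R} (hm : m ≠ ⊤) (hJ : J ≤ m) (hp : p ∈ m) (hq : q ∈ m)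
    (h : IsWeaklyRegular (R ⧸ J) [Ideal.Quotient.mk J p, Ideal.Quotient.mk J q]) :
    IsRegular (R ⧸ J) [Ideal.Quotient.mk J p, Ideal.Quotient.mk J q] := by
  refine ⟨h, fun htop ↦ hm (top_unique ?_)⟩
  rw [Ideal.ofList_cons, Ideal.ofList_singleton, Ideal.smul_eq_mul, Ideal.mul_top,
    ← Ideal.span_insert, ← Set.image_pair, ← Ideal.map_span] at htop
  have h1 : (1 : R) ∈ Ideal.span {p, q} ⊔ J := Ideal.mem_quotient_iff_mem_sup.1 (htop ▸ trivial)
  have hle : Ideal.span {p, q} ⊔ J ≤ m :=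
    sup_le (Ideal.span_le.2 (Set.insert_subset hp (Set.singleton_subset_iff.2 hq))) hJ
  exact (Ideal.eq_top_of_isUnit_mem _ (hle h1) isUnit_one).ge

lemma inf_span_pair_le_mul
    (h : IsWeaklyRegular (R ⧸ J) [Ideal.Quotient.mk J p, Ideal.Quotient.mk J q]) :
    J ⊓ Ideal.span {p, q} ≤ Ideal.span {p, q} * J := by
  obtain ⟨hp, hq⟩ := isWeaklyRegular_mk_pair_iff.1 h
  rintro _ ⟨hj, hj'⟩
  obtain ⟨s, t, rfl⟩ := Ideal.mem_span_pair.1 hj'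
  have ht : q * t ∈ J ⊔ Ideal.span {p} := by
    rw [show q * t = (s * p + t * q) + -s * p by ring]
    exact Ideal.add_mem _ (Ideal.mem_sup_left hj)
      (Ideal.mem_sup_right (Ideal.mul_mem_left _ _ (Ideal.mem_span_singleton_self p)))
  obtain ⟨j, hj₁, _, hr, rfl⟩ := Submodule.mem_sup.1 (hq t ht)
  obtain ⟨r, rfl⟩ := Ideal.mem_span_singleton.1 hr
  have hs : s + r * q ∈ J := hp _ (by
    rw [show p * (s + r * q) = (s * p + (j + p * r) * q) - q * j by ring]
    exact J.sub_mem hj (J.mul_mem_left q hj₁))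
  rw [show s * p + (j + p * r) * q = p * (s + r * q) + q * j by ring]
  exact Ideal.add_mem _
    (Ideal.mul_mem_mul (Ideal.subset_span (by simp)) hs)
    (Ideal.mul_mem_mul (Ideal.subset_span (by simp)) hj₁)

/- `R ⧸ (I ⊓ J)` is the fibre product of `R ⧸ I` and `R ⧸ J` over `R ⧸ (I ⊔ J)`. -/
lemma isWeaklyRegular_mk_pair_inf
    (hI : IsWeaklyRegular (R ⧸ I) [Ideal.Quotient.mk I p, Ideal.Quotient.mk I q])
    (hJ : IsWeaklyRegular (R ⧸ J) [Ideal.Quotient.mk J p, Ideal.Quotient.mk J q])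
    (hIJ : ∀ h, p * h ∈ I ⊔ J → h ∈ I ⊔ J) :
    IsWeaklyRegular (R ⧸ (I ⊓ J)) [Ideal.Quotient.mk (I ⊓ J) p, Ideal.Quotient.mk (I ⊓ J) q] := by
  rw [isWeaklyRegular_mk_pair_iff] at hI hJ ⊢
  refine ⟨fun h hh ↦ ⟨hI.1 h hh.1, hJ.1 h hh.2⟩, fun h hh ↦ ?_⟩
  have hle_I : I ⊓ J ⊔ Ideal.span {p} ≤ I ⊔ Ideal.span {p} := sup_le_sup_right inf_le_left _
  have hle_J : I ⊓ J ⊔ Ideal.span {p} ≤ J ⊔ Ideal.span {p} := sup_le_sup_right inf_le_right _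
  obtain ⟨i, hi, _, hs, his⟩ := Submodule.mem_sup.1 (hI.2 h (hle_I hh))
  obtain ⟨j, hj, _, ht, hjt⟩ := Submodule.mem_sup.1 (hJ.2 h (hle_J hh))
  obtain ⟨s, rfl⟩ := Ideal.mem_span_singleton.1 hs
  obtain ⟨t, rfl⟩ := Ideal.mem_span_singleton.1 ht
  have hts : p * (t - s) ∈ I ⊔ J := by
    rw [show p * (t - s) = i - j by linear_combination hjt - his]
    exact Ideal.sub_mem _ (Ideal.mem_sup_left hi) (Ideal.mem_sup_right hj)
  obtain ⟨i', hi', j', hj', hij⟩ := Submodule.mem_sup.1 (hIJ _ hts)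
  refine Submodule.mem_sup.2 ⟨i - p * i', ⟨I.sub_mem hi (I.mul_mem_left p hi'), ?_⟩,
    p * (s + i'), Ideal.mul_mem_right _ _ (Ideal.mem_span_singleton_self p), ?_⟩
  · rw [show i - p * i' = j + p * j' by linear_combination his - hjt - p * hij]
    exact J.add_mem hj (J.mul_mem_left p hj')
  · linear_combination his

lemma span_pair_inf_span_pair {x w y z : R} (hxw : ∀ h, w ∣ x * h → w ∣ h) :
    Ideal.span {x, w * y} ⊓ Ideal.span {w, x * z} = Ideal.span {x * w, x * z, w * y} := by
  apply le_antisymm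
  · rintro f ⟨hf, hf'⟩
    obtain ⟨s, t, rfl⟩ := Ideal.mem_span_pair.1 hf
    obtain ⟨s', t', hst⟩ := Ideal.mem_span_pair.1 hf'
    obtain ⟨v, hv⟩ := hxw (s - t' * z) ⟨s' - t * y, by linear_combination -hst⟩
    refine Ideal.mem_span_insert.2 ⟨v, _, Ideal.mem_span_pair.2 ⟨t', t, rfl⟩, ?_⟩
    linear_combination x * hv
  · rw [Ideal.span_le]
    rintro _ (rfl | rfl | rfl) <;>
      simp only [Submodule.coe_inf, Set.mem_inter_iff, SetLike.mem_coe, Ideal.mem_span_pair]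
    · exact ⟨⟨w, 0, by ring⟩, ⟨x, 0, by ring⟩⟩
    · exact ⟨⟨z, 0, by ring⟩, ⟨0, 1, by ring⟩⟩
    · exact ⟨⟨0, 1, by ring⟩, ⟨y, 0, by ring⟩⟩

lemma span_pair_sup_span_pair (x w y z : R) :
    Ideal.span {x, w * y} ⊔ Ideal.span {w, x * z} = Ideal.span {w, x} := by
  simp only [Ideal.span_insert]
  apply le_antisymm
  · refine sup_le (sup_le le_sup_right ?_) (sup_le le_sup_left ?_) <;>
      rw [Ideal.span_singleton_le_iff_mem]
    · exact Ideal.mem_sup_left (Ideal.mul_mem_right _ _ (Ideal.mem_span_singleton_self _))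
    · exact Ideal.mem_sup_right (Ideal.mul_mem_right _ _ (Ideal.mem_span_singleton_self _))
  · exact sup_le (le_sup_of_le_right le_sup_left) (le_sup_of_le_left le_sup_left)

lemma mem_sup_span_of_mul_mem [DecompositionMonoid R] {F : Type*} [FunLike F R R]
    [RingHomClass F R R] {ε : F} {u : R} (hε : ∀ h, h - ε h ∈ I)
    (hI : I ≤ RingHom.ker ε) (huq : IsRelPrime (ε u) (ε q)) {h : R}
    (hh : q * h ∈ I ⊔ Ideal.span {u}) : h ∈ I ⊔ Ideal.span {u} := by
  obtain ⟨i, hi, _, hr, hir⟩ := Submodule.mem_sup.1 hh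
  obtain ⟨r, rfl⟩ := Ideal.mem_span_singleton.1 hr
  obtain ⟨k, hk⟩ : ε u ∣ ε h := huq.dvd_of_dvd_mul_left ⟨ε r, by
    rw [← map_mul, ← hir, map_add, RingHom.mem_ker.1 (hI hi), zero_add, map_mul]⟩
  rw [show h = ((h - ε h) - (u - ε u) * k) + u * k by rw [hk]; ring]
  exact Ideal.add_mem _
    (Ideal.mem_sup_left (I.sub_mem (hε h) (I.mul_mem_right k (hε u))))
    (Ideal.mem_sup_right (Ideal.mul_mem_right k _ (Ideal.mem_span_singleton_self u)))

lemma exists_card_le_iff_exists_card_eq [IsDomain R] [Infinite R] (hJ : J ≠ ⊥) (n : ℕ) :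
    (∃ G : Finset R, G.card ≤ n ∧ J = Ideal.span (G : Set R)) ↔
      ∃ G : Finset R, G.card = n ∧ J = Ideal.span (G : Set R) := by
  refine ⟨fun ⟨G, hG, hJG⟩ ↦ ?_, fun ⟨G, hG, hJG⟩ ↦ ⟨G, hG.le, hJG⟩⟩
  obtain rfl | hn := n.eq_zero_or_pos
  · exact ⟨G, Nat.le_zero.1 hG, hJG⟩
  obtain ⟨p, hp, hp0⟩ := Submodule.exists_mem_ne_zero_of_ne_bot hJ
  have hinf : (J : Set R).Infinite :=
    Set.infinite_of_injective_forall_mem (mul_left_injective₀ hp0) fun r ↦ J.mul_mem_left r hp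
  have hGJ : (G : Set R) ⊆ J := hJG ▸ Ideal.subset_span
  obtain ⟨G', hGG', hG'J, hcard⟩ :=
    hinf.exists_superset_ncard_eq hGJ G.finite_toSet (by simpa using hG)
  have hfin : G'.Finite := Set.finite_of_ncard_pos (hcard ▸ hn)
  refine ⟨hfin.toFinset, by rw [← Set.ncard_eq_toFinset_card G' hfin, hcard], ?_⟩
  rw [hfin.coe_toFinset]
  exact le_antisymm (hJG.le.trans (Ideal.span_mono hGG')) (Ideal.span_le.2 hG'J)

end Quotients

section Graded

variable {σ R : Type*} [CommRing R] {J L : Ideal (MvPolynomial σ R)}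

lemma isHomogeneous_of_homogeneousComponent_mem
    (hL : ∀ f ∈ L, ∀ d, homogeneousComponent d f ∈ L) :
    L.IsHomogeneous (homogeneousSubmodule σ R) := by
  intro d f hf
  have := hL f hf d
  rwa [← decomposition.decompose'_apply] at this

lemma mem_of_forall_mem_sup_pow (hL : L.IsHomogeneous (homogeneousSubmodule σ R))
    {f : MvPolynomial σ R} (hf : ∀ n, f ∈ L ⊔ idealOfVars σ R ^ n) : f ∈ L := by
  rw [← sum_homogeneousComponent f]
  refine L.sum_mem fun d _ ↦ ?_
  obtain ⟨l, hl, r, hr, rfl⟩ := Submodule.mem_sup.1 (hf (d + 1))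
  have hr0 : homogeneousComponent d r = 0 := by
    ext α
    rw [coeff_homogeneousComponent, coeff_zero]
    split_ifs with hα
    · exact (mem_pow_idealOfVars_iff' _ _).1 hr α (by omega)
    · rfl
  rw [map_add, hr0, add_zero]
  exact homogeneousComponent_mem_of_mem hL hl d

lemma le_of_le_sup_idealOfVars_mul (hL : L.IsHomogeneous (homogeneousSubmodule σ R))
    (hJ : J ≤ L ⊔ idealOfVars σ R * J) : J ≤ L := by
  have hpow (n : ℕ) : J ≤ L ⊔ idealOfVars σ R ^ n * J := by
    induction n with
    | zero => simp
    | succ n ih =>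
      have hmul : idealOfVars σ R * J ≤ L ⊔ idealOfVars σ R ^ (n + 1) * J :=
        calc idealOfVars σ R * J ≤ idealOfVars σ R * (L ⊔ idealOfVars σ R ^ n * J) :=
              Ideal.mul_mono_right ih
          _ = idealOfVars σ R * L ⊔ idealOfVars σ R ^ (n + 1) * J := by
              rw [Ideal.mul_sup, ← mul_assoc, ← pow_succ']
          _ ≤ L ⊔ idealOfVars σ R ^ (n + 1) * J := sup_le_sup_right Ideal.mul_le_right _
      exact hJ.trans (sup_le le_sup_left hmul)
  have hsup (n : ℕ) : L ⊔ idealOfVars σ R ^ n * J ≤ L ⊔ idealOfVars σ R ^ n :=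
    sup_le_sup_left Ideal.mul_le_left L
  exact fun f hf ↦ mem_of_forall_mem_sup_pow hL fun n ↦ hsup n (hpow n hf)

/-- The quotient of the polynomial ring by `J` has a regular sequence of length two in the ideal
of the variables. If the quotient has dimension two, this says that it is Cohen–Macaulay. -/
def HasRegularPair (J : Ideal (MvPolynomial σ R)) : Prop :=
  ∃ f ∈ idealOfVars σ R, ∃ g ∈ idealOfVars σ R,
    IsRegular (MvPolynomial σ R ⧸ J) [Ideal.Quotient.mk J f, Ideal.Quotient.mk J g]

lemma X_mem_idealOfVars (i : σ) : (X i : MvPolynomial σ R) ∈ idealOfVars σ R :=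
  Ideal.subset_span ⟨i, rfl⟩

lemma idealOfVars_ne_top [Nontrivial R] : idealOfVars σ R ≠ ⊤ := by
  rw [Ideal.ne_top_iff_one, ← pow_one (idealOfVars σ R), ← C_1, C_mem_pow_idealOfVars_iff]
  simp

lemma HasRegularPair.isWeaklyRegular {p q : MvPolynomial σ R} (hCM : HasRegularPair J)
    (hJ : J.IsHomogeneous (homogeneousSubmodule σ R)) (hq : q ∈ idealOfVars σ R)
    (hpq : idealOfVars σ R ≤ (J ⊔ Ideal.span {p, q}).radical) :
    IsWeaklyRegular (MvPolynomial σ R ⧸ J) [Ideal.Quotient.mk J p, Ideal.Quotient.mk J q] := by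
  obtain ⟨f, hf, g, hg, hfg⟩ := hCM
  have mem_radical {h : MvPolynomial σ R} (hh : h ∈ idealOfVars σ R) :
      Ideal.Quotient.mk J h ∈
        (Ideal.span {Ideal.Quotient.mk J p, Ideal.Quotient.mk J q}).radical := by
    obtain ⟨n, hn⟩ := hpq hh
    refine ⟨n, ?_⟩
    rwa [← Set.image_pair, ← Ideal.map_span, ← map_pow, Ideal.mem_quotient_iff_mem_sup, sup_comm]
  refine isWeaklyRegular_pair_of_mem_radical hfg.toIsWeaklyRegular (mem_radical hf)
    (mem_radical hg) (Ideal.Quotient.mk_surjective.forall.2 fun h hh ↦ ?_)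
  refine Ideal.Quotient.eq_zero_iff_mem.2 (mem_of_forall_mem_sup_pow hJ fun n ↦ ?_)
  have hle : J ⊔ Ideal.span {q ^ n} ≤ J ⊔ idealOfVars σ R ^ n :=
    sup_le_sup_left ((Ideal.span_singleton_le_iff_mem _).2 (Ideal.pow_mem_pow hq n)) J
  exact hle (mk_dvd_mk_iff.1 (by simpa using hh n))

lemma HasRegularPair.eq_of_le_sup_span_pair {p q : MvPolynomial σ R} (hCM : HasRegularPair J)
    (hJ : J.IsHomogeneous (homogeneousSubmodule σ R))
    (hL : L.IsHomogeneous (homogeneousSubmodule σ R)) (hLJ : L ≤ J)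
    (hp : p ∈ idealOfVars σ R) (hq : q ∈ idealOfVars σ R)
    (hpq : idealOfVars σ R ≤ (J ⊔ Ideal.span {p, q}).radical)
    (hJL : J ≤ L ⊔ Ideal.span {p, q}) : J = L := by
  refine le_antisymm (le_of_le_sup_idealOfVars_mul hL ?_) hLJ
  have hpq_le : Ideal.span {p, q} ≤ idealOfVars σ R :=
    Ideal.span_le.2 (Set.insert_subset hp (Set.singleton_subset_iff.2 hq))
  calc J ≤ J ⊓ (L ⊔ Ideal.span {p, q}) := le_inf le_rfl hJL
    _ = L ⊔ Ideal.span {p, q} ⊓ J := by rw [inf_comm, sup_inf_assoc_of_le _ hLJ]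
    _ ≤ L ⊔ Ideal.span {p, q} * J := by
      rw [inf_comm]
      exact sup_le_sup_left (inf_span_pair_le_mul (hCM.isWeaklyRegular hJ hq hpq)) L
    _ ≤ L ⊔ idealOfVars σ R * J := sup_le_sup_left (Ideal.mul_mono_left hpq_le) L

end Graded

section MinimalGenerators

variable {σ ι R : Type*} [CommRing R] {J L : Ideal (MvPolynomial σ R)}

/-- Every polynomial of `J` has zero coefficient at every proper divisor of the monomial with
exponent `μ`. Then the coefficient at `μ` is a linear functional on `J / 𝔪 J`, which detects
minimal generators. -/
def VanishesBelow (J : Ideal (MvPolynomial σ R)) (μ : σ →₀ ℕ) : Prop :=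
  ∀ f ∈ J, ∀ β < μ, coeff β f = 0

lemma VanishesBelow.coeff_eq_zero {μ : σ →₀ ℕ} (hμ : VanishesBelow J μ) {f : MvPolynomial σ R}
    (hf : f ∈ idealOfVars σ R * J) : coeff μ f = 0 := by
  classical
  induction hf using Submodule.mul_induction_on' with
  | mem_mul_mem r hr g hg =>
    rw [coeff_mul]
    refine Finset.sum_eq_zero fun ⟨α, β⟩ hαβ ↦ ?_
    rw [Finset.HasAntidiagonal.mem_antidiagonal] at hαβ
    obtain rfl | hα := eq_or_ne α 0
    · rw [← pow_one (idealOfVars σ R), mem_pow_idealOfVars_iff'] at hr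
      rw [hr 0 (by simp), zero_mul]
    · rw [hμ g hg β (by rw [← hαβ]; exact lt_add_of_pos_left β (pos_iff_ne_zero.2 hα)), mul_zero]
  | add f _ g _ hf hg => rw [coeff_add, hf, hg, add_zero]

lemma sub_C_constantCoeff_mem (f : MvPolynomial σ R) :
    f - C (constantCoeff f) ∈ idealOfVars σ R := by
  rw [← pow_one (idealOfVars σ R), mem_pow_idealOfVars_iff']
  intro α hα
  obtain rfl : α = 0 := (Finsupp.degree_eq_zero_iff α).1 (Nat.lt_one_iff.1 hα)
  simp [constantCoeff_eq]

lemma mem_span_sup_idealOfVars_mul {G : Set (MvPolynomial σ R)} {f : MvPolynomial σ R}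
    (hf : f ∈ Ideal.span G) :
    f ∈ Submodule.span R G ⊔ (idealOfVars σ R * Ideal.span G).restrictScalars R := by
  induction hf using Submodule.span_induction with
  | mem g hg => exact Submodule.mem_sup_left (Submodule.subset_span hg)
  | zero => exact Submodule.zero_mem _
  | add f g _ _ hf hg => exact Submodule.add_mem _ hf hg
  | smul r f hf ih =>
    rw [smul_eq_mul, show r * f = constantCoeff r • f + (r - C (constantCoeff r)) * f by
      rw [smul_eq_C_mul]; ring]
    exact Submodule.add_mem _ (Submodule.smul_mem _ _ ih)
      (Submodule.mem_sup_right (Ideal.mul_mem_mul (sub_C_constantCoeff_mem r) hf))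

/-- The vector of coefficients at a family `μ` of exponents. -/
noncomputable def coeffVec (R : Type*) [CommRing R] (μ : ι → σ →₀ ℕ) :
    MvPolynomial σ R →ₗ[R] ι → R :=
  LinearMap.pi fun i ↦ lcoeff R (μ i)

variable {μ : ι → σ →₀ ℕ}

@[simp]
lemma coeffVec_apply (f : MvPolynomial σ R) (i : ι) :
    coeffVec R μ f i = coeff (μ i) f :=
  rfl

lemma exists_mem_span_coeffVec_eq {G : Set (MvPolynomial σ R)} (hJG : J = Ideal.span G)
    (hμ : ∀ i, VanishesBelow J (μ i)) {f : MvPolynomial σ R} (hf : f ∈ J) :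
    ∃ g ∈ Submodule.span R G,
      coeffVec R μ g = coeffVec R μ f ∧ f - g ∈ idealOfVars σ R * J := by
  subst hJG
  obtain ⟨g, hg, r, hr, rfl⟩ := Submodule.mem_sup.1 (mem_span_sup_idealOfVars_mul hf)
  refine ⟨g, hg, ?_, by rwa [add_sub_cancel_left]⟩
  ext i
  simp [(hμ i).coeff_eq_zero hr]

variable [DecidableEq ι] {e : ι → MvPolynomial σ R}

lemma map_coeffVec_span_eq_top [Finite ι] {G : Set (MvPolynomial σ R)}
    (hJG : J = Ideal.span G) (hμ : ∀ i, VanishesBelow J (μ i)) (he : ∀ i, e i ∈ J)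
    (hμe : ∀ j, coeffVec R μ (e j) = Pi.single j 1) :
    (Submodule.span R G).map (coeffVec R μ) = ⊤ := by
  rw [eq_top_iff, ← (Pi.basisFun R ι).span_eq, Submodule.span_le]
  rintro _ ⟨j, rfl⟩
  obtain ⟨g, hg, hge, -⟩ := exists_mem_span_coeffVec_eq hJG hμ (he j)
  exact ⟨g, hg, by rw [hge, hμe, Pi.basisFun_apply]⟩

variable {K : Type*} [Field K] [Fintype ι] {J : Ideal (MvPolynomial σ K)}
  {e : ι → MvPolynomial σ K} {G : Finset (MvPolynomial σ K)}

lemma card_le_card_of_coeffVec_eq_single (hJG : J = Ideal.span G)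
    (hμ : ∀ i, VanishesBelow J (μ i)) (he : ∀ i, e i ∈ J)
    (hμe : ∀ j, coeffVec K μ (e j) = Pi.single j 1) : Fintype.card ι ≤ G.card := by
  have hrank := Submodule.finrank_map_le (coeffVec K μ)
    (Submodule.span K (G : Set (MvPolynomial σ K)))
  rw [map_coeffVec_span_eq_top hJG hμ he hμe, finrank_top, Module.finrank_fintype_fun_eq_card]
    at hrank
  exact hrank.trans (finrank_span_finset_le_card G)

lemma injOn_coeffVec_span (hJG : J = Ideal.span G) (hμ : ∀ i, VanishesBelow J (μ i))
    (he : ∀ i, e i ∈ J) (hμe : ∀ j, coeffVec K μ (e j) = Pi.single j 1)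
    (hG : G.card ≤ Fintype.card ι) :
    Set.InjOn (coeffVec K μ) (Submodule.span K (G : Set (MvPolynomial σ K))) := by
  set V := Submodule.span K (G : Set (MvPolynomial σ K))
  have hsurj : Function.Surjective ((coeffVec K μ).domRestrict V) := by
    rw [← LinearMap.range_eq_top, LinearMap.range_domRestrict]
    exact map_coeffVec_span_eq_top hJG hμ he hμe
  have hrank : Module.finrank K V = Module.finrank K (ι → K) := by
    refine le_antisymm ?_ (LinearMap.finrank_le_finrank_of_surjective hsurj)
    rw [Module.finrank_fintype_fun_eq_card]
    exact (finrank_span_finset_le_card G).trans hG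
  rw [Set.injOn_iff_injective]
  exact (LinearMap.injective_iff_surjective_of_finrank_eq_finrank hrank).2 hsurj

lemma eq_span_range_of_card_le (hJG : J = Ideal.span G) (hμ : ∀ i, VanishesBelow J (μ i))
    (he : ∀ i, e i ∈ J) (hμe : ∀ j, coeffVec K μ (e j) = Pi.single j 1)
    (hL : (Ideal.span (Set.range e)).IsHomogeneous (homogeneousSubmodule σ K))
    (hG : G.card ≤ Fintype.card ι) : J = Ideal.span (Set.range e) := by
  set V := Submodule.span K (G : Set (MvPolynomial σ K))
  choose E hEV hE hEe using fun j ↦ exists_mem_span_coeffVec_eq hJG hμ (he j)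
  have eq_sum (g) (hg : g ∈ V) : g = ∑ j, coeff (μ j) g • E j := by
    refine injOn_coeffVec_span hJG hμ he hμe hG hg (V.sum_mem fun j _ ↦ V.smul_mem _ (hEV j)) ?_
    rw [map_sum]
    ext i
    simp only [map_smul, hE, hμe, Finset.sum_apply, Pi.smul_apply, Pi.single_apply, smul_eq_mul,
      mul_ite, mul_one, mul_zero, Finset.sum_ite_eq, Finset.mem_univ, if_true, coeffVec_apply]
  refine le_antisymm (le_of_le_sup_idealOfVars_mul hL ?_)
    (Ideal.span_le.2 (Set.range_subset_iff.2 he))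
  conv_lhs => rw [hJG]
  refine Ideal.span_le.2 fun g hg ↦ ?_
  rw [eq_sum g (Submodule.subset_span hg)]
  refine Ideal.sum_mem _ fun j _ ↦ ?_
  rw [smul_eq_C_mul, show E j = e j - (e j - E j) by ring]
  exact Ideal.mul_mem_left _ _ (Ideal.sub_mem _
    (Ideal.mem_sup_left (Ideal.subset_span ⟨j, rfl⟩)) (Ideal.mem_sup_right (hEe j)))

end MinimalGenerators

section MonomialIdeals

variable {σ K ι : Type*} [Field K]

lemma le_of_forall_coeff_ne_zero {R : Type*} [CommRing R] {J L : Ideal (MvPolynomial σ R)}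
    (h : ∀ f ∈ J, ∀ α, coeff α f ≠ 0 → monomial α (1 : R) ∈ L) : J ≤ L := by
  intro f hf
  rw [f.as_sum]
  refine L.sum_mem fun α hα ↦ ?_
  rw [← mul_one (coeff α f), ← C_mul_monomial]
  exact L.mul_mem_left _ (h f hf α (mem_support_iff.1 hα))

/- By rigidity, either condition forces `J` to coincide with the monomial ideal. -/
theorem hasRegularPair_iff_exists_card_le [Fintype ι] {J L : Ideal (MvPolynomial σ K)}
    {μ : ι → σ →₀ ℕ} {p q : MvPolynomial σ K}
    (hJ : J.IsHomogeneous (homogeneousSubmodule σ K)) (hinj : Function.Injective μ)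
    (hmem : ∀ i, monomial (μ i) (1 : K) ∈ J) (hμ : ∀ i, VanishesBelow J (μ i))
    (hp : p ∈ idealOfVars σ K) (hq : q ∈ idealOfVars σ K)
    (hL : L = Ideal.span (Set.range fun i ↦ monomial (μ i) 1)) (hCM : HasRegularPair L)
    (hrad : idealOfVars σ K ≤ (L ⊔ Ideal.span {p, q}).radical)
    (hJL : J ≤ L ⊔ Ideal.span {p, q}) :
    HasRegularPair J ↔ ∃ G : Finset (MvPolynomial σ K), G.card ≤ Fintype.card ι ∧
      J = Ideal.span (G : Set (MvPolynomial σ K)) := by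
  classical
  have hLJ : L ≤ J := hL ▸ Ideal.span_le.2 (Set.range_subset_iff.2 hmem)
  have hLhom : L.IsHomogeneous (homogeneousSubmodule σ K) := by
    rw [hL]
    refine Ideal.homogeneous_span _ _ ?_
    rintro _ ⟨i, rfl⟩
    exact ⟨(μ i).degree, isHomogeneous_monomial 1 rfl⟩
  constructor
  · intro hJCM
    have hJeq : J = L := hJCM.eq_of_le_sup_span_pair hJ hLhom hLJ hp hq
      (hrad.trans (Ideal.radical_mono (sup_le_sup_right hLJ _))) hJL
    exact ⟨Finset.univ.image fun i ↦ monomial (μ i) 1, Finset.card_image_le,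
      by rw [hJeq, hL, Finset.coe_image, Finset.coe_univ, Set.image_univ]⟩
  · rintro ⟨G, hG, hJG⟩
    suffices J = L from this ▸ hCM
    rw [hL] at hLhom ⊢
    refine eq_span_range_of_card_le hJG hμ hmem (fun j ↦ ?_) hLhom hG
    ext i
    simp [Pi.single_apply, hinj.eq_iff, eq_comm]

end MonomialIdeals

section Retractions

variable {σ K R F : Type*} [Field K] [CommRing R] [FunLike F R R] [RingHomClass F R R]
  {S : Ideal R} {u p q : R}

lemma isWeaklyRegular_mk_sup_span_singleton [DecompositionMonoid R] {ε δ : F}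
    (hε : ∀ h, h - ε h ∈ S) (hεS : S ≤ RingHom.ker ε)
    (hδ : ∀ h, h - δ h ∈ S ⊔ Ideal.span {p}) (hδS : S ⊔ Ideal.span {p} ≤ RingHom.ker δ)
    (hp : IsRelPrime (ε u) (ε p)) (hq : IsRelPrime (δ u) (δ q)) :
    IsWeaklyRegular (R ⧸ (S ⊔ Ideal.span {u}))
      [Ideal.Quotient.mk (S ⊔ Ideal.span {u}) p, Ideal.Quotient.mk (S ⊔ Ideal.span {u}) q] := by
  refine isWeaklyRegular_mk_pair_iff.2 ⟨fun h ↦ mem_sup_span_of_mul_mem hε hεS hp, fun h ↦ ?_⟩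
  rw [sup_right_comm]
  exact mem_sup_span_of_mul_mem hδ hδS hq

lemma sub_aeval_mem {S : Ideal (MvPolynomial σ R)} {v : σ → MvPolynomial σ R}
    (hv : ∀ i, X i - v i ∈ S) (h : MvPolynomial σ R) : h - aeval v h ∈ S := by
  induction h using MvPolynomial.induction_on with
  | C r => simp
  | add f g hf hg => rw [map_add, add_sub_add_comm]; exact S.add_mem hf hg
  | mul_X f i hf =>
    rw [map_mul, aeval_X,
      show f * X i - aeval v f * v i = (f - aeval v f) * X i + aeval v f * (X i - v i) by ring]
    exact S.add_mem (S.mul_mem_right _ hf) (S.mul_mem_left _ (hv i))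

lemma isRelPrime_X_pow_left {i : σ} {f : MvPolynomial σ K} (hf : ¬ X i ∣ f) (n : ℕ) :
    IsRelPrime (X i ^ n) f :=
  ((X_prime.irreducible.isRelPrime_iff_not_dvd).2 hf).pow_left

lemma not_X_dvd_X_add_X {i j k : σ} (hij : i = j ∨ i = k) (hjk : j ≠ k) :
    ¬ (X i : MvPolynomial σ K) ∣ X j + X k := by
  obtain rfl | rfl := hij
  · rwa [dvd_add_right dvd_rfl, X_dvd_X]
  · rw [dvd_add_left dvd_rfl, X_dvd_X]; exact hjk.symm

variable {x y z w : σ}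

lemma isWeaklyRegular_mk_span_X_left (hnd : [x, y, z, w].Nodup) (n m : ℕ)
    {I : Ideal (MvPolynomial σ K)} (hI : I = Ideal.span {X x, X w ^ n * X y ^ m}) :
    IsWeaklyRegular (MvPolynomial σ K ⧸ I)
      [Ideal.Quotient.mk I (X x + X z), Ideal.Quotient.mk I (X y + X w)] := by
  classical
  simp only [List.nodup_cons, List.mem_cons, List.not_mem_nil, or_false, not_or] at hnd
  obtain ⟨⟨hxy, hxz, hxw⟩, ⟨hyz, hyw⟩, hzw, -⟩ := hnd
  rw [hI, Ideal.span_insert]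
  refine isWeaklyRegular_mk_sup_span_singleton (ε := aeval (Function.update X x 0))
    (δ := aeval (Function.update (Function.update X x 0) z 0)) ?_ ?_ ?_ ?_ ?_ ?_
  · refine sub_aeval_mem fun i ↦ ?_
    by_cases hix : i = x <;> simp [hix]
  · simp
  · refine sub_aeval_mem fun i ↦ ?_
    rw [← Ideal.span_insert]
    by_cases hiz : i = z
    · rw [hiz, Function.update_self]
      exact Ideal.mem_span_pair.2 ⟨-1, 1, by ring⟩
    · by_cases hix : i = x
      · simpa [hix, hxz] using Ideal.subset_span (Set.mem_insert _ _)
      · simp [hiz, hix]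
  · simp [hxz]
  · simp only [map_mul, map_pow, map_add, aeval_X, Function.update_self, Function.update_of_ne,
      ne_eq, Ne.symm hxy, Ne.symm hxz, Ne.symm hxw, not_false_eq_true, zero_add]
    exact (isRelPrime_X_pow_left (by rw [X_dvd_X]; exact Ne.symm hzw) n).mul_left
      (isRelPrime_X_pow_left (by rw [X_dvd_X]; exact hyz) m)
  · simp only [map_mul, map_pow, map_add, aeval_X, Function.update_of_ne,
      ne_eq, Ne.symm hxy, Ne.symm hxw, hyz, Ne.symm hzw, not_false_eq_true]
    exact (isRelPrime_X_pow_left (not_X_dvd_X_add_X (.inr rfl) hyw) n).mul_left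
      (isRelPrime_X_pow_left (not_X_dvd_X_add_X (.inl rfl) hyw) m)

lemma isWeaklyRegular_mk_span_X_right (hnd : [x, y, z, w].Nodup) (n m : ℕ)
    {I : Ideal (MvPolynomial σ K)} (hI : I = Ideal.span {X w, X x ^ n * X z ^ m}) :
    IsWeaklyRegular (MvPolynomial σ K ⧸ I)
      [Ideal.Quotient.mk I (X x + X z), Ideal.Quotient.mk I (X y + X w)] := by
  classical
  simp only [List.nodup_cons, List.mem_cons, List.not_mem_nil, or_false, not_or] at hnd
  obtain ⟨⟨hxy, hxz, hxw⟩, ⟨hyz, hyw⟩, hzw, -⟩ := hnd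
  rw [hI, Ideal.span_insert]
  refine isWeaklyRegular_mk_sup_span_singleton (ε := aeval (Function.update X w 0))
    (δ := aeval (Function.update (Function.update X w 0) z (-X x))) ?_ ?_ ?_ ?_ ?_ ?_
  · refine sub_aeval_mem fun i ↦ ?_
    by_cases hiw : i = w <;> simp [hiw]
  · simp
  · refine sub_aeval_mem fun i ↦ ?_
    rw [← Ideal.span_insert]
    by_cases hiz : i = z
    · simpa [hiz] using Ideal.mem_span_pair.2 ⟨0, 1, by ring⟩
    · by_cases hiw : i = w
      · simpa [hiw, Ne.symm hzw] using Ideal.subset_span (Set.mem_insert _ _)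
      · simp [hiz, hiw]
  · simp [hxz, hxw, Ne.symm hzw]
  · simp only [map_mul, map_pow, map_add, aeval_X, Function.update_of_ne,
      ne_eq, hxw, hzw, not_false_eq_true]
    exact (isRelPrime_X_pow_left (not_X_dvd_X_add_X (.inl rfl) hxz) n).mul_left
      (isRelPrime_X_pow_left (not_X_dvd_X_add_X (.inr rfl) hxz) m)
  · have hrel : IsRelPrime (X x : MvPolynomial σ K) (X y) := by
      simpa using isRelPrime_X_pow_left (by rwa [X_dvd_X]) 1
    simp only [map_mul, map_pow, map_add, aeval_X, Function.update_self, Function.update_of_ne,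
      ne_eq, hxz, hxw, hyz, hyw, Ne.symm hzw, not_false_eq_true, add_zero]
    exact hrel.pow_left.mul_left hrel.neg_left.pow_left

lemma mem_span_X_pair_of_mul_mem (hxz : x ≠ z) (hxw : x ≠ w) (hzw : z ≠ w)
    {h : MvPolynomial σ K} (hh : (X x + X z) * h ∈ Ideal.span {X w, X x}) :
    h ∈ Ideal.span {X w, X x} := by
  classical
  rw [Ideal.span_insert] at hh ⊢
  refine mem_sup_span_of_mul_mem (ε := aeval (Function.update X w 0)) ?_ ?_ ?_ hh
  · refine sub_aeval_mem fun i ↦ ?_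
    by_cases hiw : i = w <;> simp [hiw]
  · simp
  · simpa [hxw, hzw] using
      isRelPrime_X_pow_left (not_X_dvd_X_add_X (K := K) (.inl rfl) hxz) 1

/- The ideal is the intersection of `(x, w ^ (n + 1) y ^ m)` and `(w, x ^ (n + 1) z ^ m)`, two
complete intersections whose sum `(x, w)` is prime. -/
theorem hasRegularPair_span_triple (hnd : [x, y, z, w].Nodup) (n m : ℕ) :
    HasRegularPair (Ideal.span {(X x : MvPolynomial σ K) * X w, X x ^ (n + 1) * X z ^ m,
      X w ^ (n + 1) * X y ^ m}) := by
  have hxzm := Ideal.add_mem _ (X_mem_idealOfVars (R := K) x) (X_mem_idealOfVars z)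
  have hywm := Ideal.add_mem _ (X_mem_idealOfVars (R := K) y) (X_mem_idealOfVars w)
  have hxw : x ≠ w := fun h ↦ by simp [h] at hnd
  rw [show (X x ^ (n + 1) * X z ^ m : MvPolynomial σ K) = X x * (X x ^ n * X z ^ m) by ring,
    show (X w ^ (n + 1) * X y ^ m : MvPolynomial σ K) = X w * (X w ^ n * X y ^ m) by ring,
    ← span_pair_inf_span_pair fun h hh ↦ (X_prime.dvd_or_dvd hh).resolve_left
      (by rw [X_dvd_X]; exact hxw.symm)]
  refine ⟨_, hxzm, _, hywm, isRegular_mk_pair_of_mem idealOfVars_ne_top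
    (inf_le_left.trans (Ideal.span_le.2 ?_)) hxzm hywm
    (isWeaklyRegular_mk_pair_inf (isWeaklyRegular_mk_span_X_left hnd (n + 1) m (by ring_nf))
      (isWeaklyRegular_mk_span_X_right hnd (n + 1) m (by ring_nf)) fun h hh ↦ ?_)⟩
  · rintro _ (rfl | rfl)
    · exact X_mem_idealOfVars x
    · exact Ideal.mul_mem_right _ _ (X_mem_idealOfVars w)
  · rw [span_pair_sup_span_pair] at hh ⊢
    exact mem_span_X_pair_of_mul_mem (fun h ↦ by simp [h] at hnd) hxw
      (fun h ↦ by simp [h] at hnd) hh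

end Retractions

section MonomialFiberCone

variable {σ τ R : Type*} [CommRing R] {e : σ → τ →₀ ℕ}

/-- `J` is the defining ideal of the fiber cone `⨁ I ^ d / 𝔪 I ^ d` of the monomial ideal `I`
generated by the monomials with exponents `e i`, presented by `X i ↦ monomial (e i) 1`. -/
def IsFiberConeIdeal (e : σ → τ →₀ ℕ) (J : Ideal (MvPolynomial σ R)) : Prop :=
  ∀ f, f ∈ J ↔ ∀ d, aeval (fun i ↦ monomial (e i) (1 : R)) (homogeneousComponent d f) ∈
    idealOfVars τ R * Ideal.span (Set.range fun i ↦ monomial (e i) 1) ^ d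

/-- The product of the generators with exponents `e`, taken with multiplicities `α`, lies in
`𝔪 I ^ d`, where `d` is the number of factors. Equivalently, the monomial `α` vanishes in the
fiber cone. -/
def Redundant (e : σ → τ →₀ ℕ) (α : σ →₀ ℕ) : Prop :=
  ∃ β : σ →₀ ℕ, β.degree = α.degree ∧ Finsupp.weight e β < Finsupp.weight e α

/-- The products of the generators with multiplicities `α` and `β` have equally many factors and
are equal. -/
def FiberEquiv (e : σ → τ →₀ ℕ) (α β : σ →₀ ℕ) : Prop :=
  β.degree = α.degree ∧ Finsupp.weight e β = Finsupp.weight e α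

/-- The monomial `α` is nonzero in the fiber cone and equal to no other monomial. -/
def Isolated (e : σ → τ →₀ ℕ) (α : σ →₀ ℕ) : Prop :=
  ¬ Redundant e α ∧ ∀ β, FiberEquiv e α β → β = α

lemma Redundant.mono {α β : σ →₀ ℕ} (h : Redundant e α) (hαβ : α ≤ β) : Redundant e β := by
  obtain ⟨γ, rfl⟩ := exists_add_of_le hαβ
  obtain ⟨δ, hdeg, hlt⟩ := h
  refine ⟨δ + γ, by simp [hdeg], ?_⟩
  rw [map_add, map_add]
  exact add_lt_add_left hlt _

lemma FiberEquiv.trans {α β γ : σ →₀ ℕ} (hαβ : FiberEquiv e α β) (hβγ : FiberEquiv e β γ) :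
    FiberEquiv e α γ :=
  ⟨hβγ.1.trans hαβ.1, hβγ.2.trans hαβ.2⟩

lemma FiberEquiv.add_right {α β : σ →₀ ℕ} (h : FiberEquiv e α β) (γ : σ →₀ ℕ) :
    FiberEquiv e (α + γ) (β + γ) :=
  ⟨by simp [h.1], by simp [h.2]⟩

lemma Isolated.mono {α β : σ →₀ ℕ} (h : Isolated e β) (hαβ : α ≤ β) : Isolated e α := by
  refine ⟨fun hα ↦ h.1 (hα.mono hαβ), fun δ hδ ↦ ?_⟩
  obtain ⟨γ, rfl⟩ := exists_add_of_le hαβ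
  exact add_right_cancel (h.2 _ (hδ.add_right γ))

lemma isolated_zero (e : σ → τ →₀ ℕ) : Isolated e 0 := by
  refine ⟨?_, fun β hβ ↦ (Finsupp.degree_eq_zero_iff β).1 (by simpa using hβ.1)⟩
  rintro ⟨β, -, hlt⟩
  simp at hlt

lemma aeval_monomial_one (α : σ →₀ ℕ) :
    aeval (fun i ↦ monomial (e i) (1 : R)) (monomial α (1 : R)) =
      monomial (Finsupp.weight e α) 1 := by
  rw [aeval_monomial, map_one, one_mul, Finsupp.weight_apply, Finsupp.prod, Finsupp.sum,
    monomial_sum_one]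
  simp only [monomial_pow, one_pow]

lemma coeff_aeval [DecidableEq τ] (f : MvPolynomial σ R) (γ : τ →₀ ℕ) :
    coeff γ (aeval (fun i ↦ monomial (e i) (1 : R)) f) =
      ∑ β ∈ f.support with Finsupp.weight e β = γ, coeff β f := by
  conv_lhs => rw [f.as_sum, map_sum, coeff_sum]
  rw [Finset.sum_filter]
  refine Finset.sum_congr rfl fun β _ ↦ ?_
  rw [← mul_one (coeff β f), ← C_mul_monomial, map_mul, aeval_C, algebraMap_eq, coeff_C_mul,
    aeval_monomial_one, coeff_monomial, mul_ite, mul_one, mul_zero]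

lemma span_range_monomial_pow (d : ℕ) :
    Ideal.span (Set.range fun i ↦ monomial (e i) (1 : R)) ^ d =
      Ideal.span ((fun β ↦ monomial (Finsupp.weight e β) 1) '' {β | β.degree = d}) := by
  have hmap : Ideal.span (Set.range fun i ↦ monomial (e i) (1 : R)) =
      (idealOfVars σ R).map (aeval (R := R) fun i ↦ monomial (e i) (1 : R)) := by
    rw [idealOfVars, Ideal.map_span, ← Set.range_comp]
    simp [Function.comp_def]
  rw [hmap, ← Ideal.map_pow, pow_idealOfVars_eq_span, Ideal.map_span, Set.image_image]
  simp only [aeval_monomial_one]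
  rfl

lemma mem_idealOfVars_mul_span_pow_iff {d : ℕ} {g : MvPolynomial τ R} :
    g ∈ idealOfVars τ R * Ideal.span (Set.range fun i ↦ monomial (e i) (1 : R)) ^ d ↔
      ∀ γ ∈ g.support, ∃ β : σ →₀ ℕ, β.degree = d ∧ Finsupp.weight e β < γ := by
  have hspan : idealOfVars τ R * Ideal.span (Set.range fun i ↦ monomial (e i) (1 : R)) ^ d =
      Ideal.span ((fun γ ↦ monomial γ 1) ''
        Set.image2 (fun i β ↦ Finsupp.single i 1 + Finsupp.weight e β) Set.univ
          {β | β.degree = d}) := by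
    rw [span_range_monomial_pow, idealOfVars, Ideal.span_mul_span', ← Set.image_univ,
      ← Set.image2_mul, Set.image2_image_left, Set.image2_image_right, Set.image_image2]
    simp only [X, monomial_mul, one_mul]
  rw [hspan, mem_ideal_span_monomial_image]
  refine forall₂_congr fun γ _ ↦ ⟨?_, ?_⟩
  · rintro ⟨_, ⟨i, -, β, hβ, rfl⟩, hle⟩
    exact ⟨β, hβ, (lt_add_of_pos_left _ (by simp [pos_iff_ne_zero])).trans_le hle⟩
  · rintro ⟨β, hβ, hlt⟩
    obtain ⟨δ, rfl⟩ := exists_add_of_le hlt.le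
    obtain ⟨i, hi⟩ := Finsupp.ne_iff.1 (show δ ≠ 0 by rintro rfl; simp at hlt)
    refine ⟨_, ⟨i, trivial, β, hβ, rfl⟩, ?_⟩
    rw [add_comm _ δ]
    exact add_le_add (Finsupp.single_le_iff.2 (Nat.one_le_iff_ne_zero.2 hi)) le_rfl

namespace IsFiberConeIdeal

variable {J : Ideal (MvPolynomial σ R)} {α β : σ →₀ ℕ}

lemma mem_iff_of_isHomogeneous (hJ : IsFiberConeIdeal e J) {f : MvPolynomial σ R} {d : ℕ}
    (hf : f.IsHomogeneous d) :
    f ∈ J ↔ aeval (fun i ↦ monomial (e i) (1 : R)) f ∈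
      idealOfVars τ R * Ideal.span (Set.range fun i ↦ monomial (e i) 1) ^ d := by
  rw [hJ]
  refine ⟨fun h ↦ by simpa [homogeneousComponent_of_mem hf] using h d, fun h n ↦ ?_⟩
  rw [homogeneousComponent_of_mem hf]
  split_ifs with hn
  · rwa [hn]
  · rw [map_zero]; exact zero_mem _

lemma isHomogeneous (hJ : IsFiberConeIdeal e J) : J.IsHomogeneous (homogeneousSubmodule σ R) := by
  refine isHomogeneous_of_homogeneousComponent_mem fun f hf d ↦ ?_
  rw [hJ.mem_iff_of_isHomogeneous (homogeneousComponent_isHomogeneous d f)]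
  exact (hJ f).1 hf d

lemma monomial_mem (hJ : IsFiberConeIdeal e J) (hα : Redundant e α) : monomial α (1 : R) ∈ J := by
  obtain ⟨β, hdeg, hlt⟩ := hα
  rw [hJ.mem_iff_of_isHomogeneous (isHomogeneous_monomial 1 rfl), aeval_monomial_one,
    mem_idealOfVars_mul_span_pow_iff]
  intro γ hγ
  rw [Finset.mem_singleton.1 (support_monomial_subset hγ)]
  exact ⟨β, hdeg, hlt⟩

lemma monomial_sub_mem (hJ : IsFiberConeIdeal e J) (h : FiberEquiv e α β) :
    monomial α (1 : R) - monomial β 1 ∈ J := by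
  rw [hJ.mem_iff_of_isHomogeneous
    ((isHomogeneous_monomial 1 rfl).sub (isHomogeneous_monomial 1 h.1)), map_sub,
    aeval_monomial_one, aeval_monomial_one, h.2, sub_self]
  exact zero_mem _

lemma exists_fiberEquiv (hJ : IsFiberConeIdeal e J) {f : MvPolynomial σ R} (hf : f ∈ J)
    (hα : coeff α f ≠ 0) (hred : ¬ Redundant e α) :
    ∃ β ≠ α, FiberEquiv e α β ∧ coeff β f ≠ 0 := by
  classical
  by_contra! hne
  refine hred (mem_idealOfVars_mul_span_pow_iff.1 ((hJ f).1 hf α.degree) _ ?_)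
  rw [mem_support_iff, coeff_aeval, Finset.sum_eq_single_of_mem α]
  · rwa [coeff_homogeneousComponent, if_pos rfl]
  · simp [coeff_homogeneousComponent, hα]
  · intro β hβ hβα
    rw [Finset.mem_filter, mem_support_iff, coeff_homogeneousComponent] at hβ
    rw [coeff_homogeneousComponent]
    split_ifs with hdeg
    · exact hne β hβα ⟨hdeg, hβ.2⟩
    · rfl

lemma coeff_eq_zero (hJ : IsFiberConeIdeal e J) {f : MvPolynomial σ R} (hf : f ∈ J)
    (hα : Isolated e α) : coeff α f = 0 := by
  by_contra hne
  obtain ⟨β, hβα, hβ, -⟩ := hJ.exists_fiberEquiv hf hne hα.1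
  exact hβα (hα.2 β hβ)

lemma vanishesBelow (hJ : IsFiberConeIdeal e J) (h : ∀ β < α, Isolated e β) : VanishesBelow J α :=
  fun _ hf β hβ ↦ hJ.coeff_eq_zero hf (h β hβ)

lemma le_idealOfVars (hJ : IsFiberConeIdeal e J) : J ≤ idealOfVars σ R := by
  intro f hf
  rw [← pow_one (idealOfVars σ R), mem_pow_idealOfVars_iff']
  intro α hα
  rw [(Finsupp.degree_eq_zero_iff α).1 (Nat.lt_one_iff.1 hα)]
  exact hJ.coeff_eq_zero hf (isolated_zero e)

end IsFiberConeIdeal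

end MonomialFiberCone

section NormalForms

variable {σ τ R : Type*} [CommRing R] {e : σ → τ →₀ ℕ} {J : Ideal (MvPolynomial σ R)}
  {s : Set (σ →₀ ℕ)} {x y : σ}

lemma X_mul_mem_restrictSupport_iff (hx : ∀ α, α + Finsupp.single x 1 ∈ s ↔ α ∈ s)
    {f : MvPolynomial σ R} : X x * f ∈ restrictSupport R s ↔ f ∈ restrictSupport R s := by
  simp only [mem_restrictSupport_iff, support_X_mul, Finset.coe_map, Set.image_subset_iff]
  refine forall₂_congr fun α _ ↦ ?_
  rw [← hx α, add_comm]
  rfl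

lemma isWeaklyRegular_mk_X_pair_of_isCompl [IsDomain R]
    (h : IsCompl (J.restrictScalars R) (restrictSupport R s)) (hxy : x ≠ y)
    (hx : ∀ α, α + Finsupp.single x 1 ∈ s ↔ α ∈ s)
    (hy : ∀ α, α + Finsupp.single y 1 ∈ s ↔ α ∈ s) :
    IsWeaklyRegular (MvPolynomial σ R ⧸ J)
      [Ideal.Quotient.mk J (X x), Ideal.Quotient.mk J (X y)] := by
  have exists_normal (f) : ∃ j ∈ J, ∃ n ∈ restrictSupport R s, j + n = f :=
    Submodule.mem_sup.1 (h.sup_eq_top ▸ Submodule.mem_top)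
  have eq_zero {f} (hfJ : f ∈ J) (hfs : f ∈ restrictSupport R s) : f = 0 :=
    Submodule.disjoint_def.1 h.disjoint f hfJ hfs
  refine isWeaklyRegular_mk_pair_iff.2 ⟨fun f hf ↦ ?_, fun f hf ↦ ?_⟩
  · obtain ⟨j, hj, n, hn, rfl⟩ := exists_normal f
    rw [mul_add] at hf
    have hxn := eq_zero ((J.add_mem_iff_right (J.mul_mem_left _ hj)).1 hf)
      ((X_mul_mem_restrictSupport_iff hx).2 hn)
    rw [(mul_eq_zero.1 hxn).resolve_left (X_ne_zero x), add_zero]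
    exact hj
  · obtain ⟨j, hj, n, hn, rfl⟩ := exists_normal f
    obtain ⟨i, hi, _, hg, hif⟩ := Submodule.mem_sup.1 hf
    obtain ⟨g, rfl⟩ := Ideal.mem_span_singleton'.1 hg
    obtain ⟨k, hk, m, hm, rfl⟩ := exists_normal g
    have hnm : X y * n - X x * m = 0 := by
      refine eq_zero ?_ (Submodule.sub_mem _ ((X_mul_mem_restrictSupport_iff hy).2 hn)
        ((X_mul_mem_restrictSupport_iff hx).2 hm))
      rw [show X y * n - X x * m = i + X x * k - X y * j by linear_combination -hif]
      exact J.sub_mem (J.add_mem hi (J.mul_mem_left _ hk)) (J.mul_mem_left _ hj)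
    have hdvd : X x ∣ n := (X_prime.dvd_or_dvd ⟨m, sub_eq_zero.1 hnm⟩).resolve_left
      (by rwa [X_dvd_X])
    exact Ideal.add_mem _ (Ideal.mem_sup_left hj)
      (Ideal.mem_sup_right (Ideal.mem_span_singleton.2 hdvd))

/-- The exponents in `s` are normal forms for the monomials of the fiber cone: each nonzero
monomial is equal to exactly one with exponent in `s`. -/
structure IsNormalFormSet (e : σ → τ →₀ ℕ) (s : Set (σ →₀ ℕ)) : Prop where
  not_redundant : ∀ α ∈ s, ¬ Redundant e α
  exists_fiberEquiv : ∀ α, Redundant e α ∨ ∃ β ∈ s, FiberEquiv e α β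
  eq_of_fiberEquiv : ∀ α ∈ s, ∀ β ∈ s, FiberEquiv e α β → β = α

lemma IsFiberConeIdeal.isCompl_restrictSupport (hJ : IsFiberConeIdeal e J)
    (hs : IsNormalFormSet e s) : IsCompl (J.restrictScalars R) (restrictSupport R s) := by
  constructor
  · refine Submodule.disjoint_def.2 fun f hfJ hfs ↦ ?_
    ext α
    rw [coeff_zero]
    by_contra hα
    have mem_of_coeff {β} (hβ : coeff β f ≠ 0) : β ∈ s :=
      (mem_restrictSupport_iff R).1 hfs (mem_support_iff.2 hβ)
    obtain ⟨β, hβα, hαβ, hβ⟩ := hJ.exists_fiberEquiv hfJ hα (hs.not_redundant α (mem_of_coeff hα))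
    exact hβα (hs.eq_of_fiberEquiv α (mem_of_coeff hα) β (mem_of_coeff hβ) hαβ)
  · rw [codisjoint_iff, eq_top_iff]
    rintro f -
    rw [f.as_sum]
    refine Submodule.sum_mem _ fun α _ ↦ ?_
    rw [← mul_one (coeff α f), ← smul_eq_mul, ← smul_monomial]
    refine Submodule.smul_mem _ _ ?_
    obtain hα | ⟨β, hβ, hαβ⟩ := hs.exists_fiberEquiv α
    · exact Submodule.mem_sup_left (hJ.monomial_mem hα)
    · rw [← sub_add_cancel (monomial α (1 : R)) (monomial β 1)]
      exact Submodule.add_mem_sup (hJ.monomial_sub_mem hαβ)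
        ((monomial_mem_restrictSupport R).2 (.inl hβ))

end NormalForms

section FourVariables

variable {R : Type*} [CommRing R] {i j k l p q r s : ℕ}

/-- The exponent vector of the monomial `z₁ ^ i z₂ ^ j z₃ ^ k z₄ ^ l`. The variable `z_{n + 1}` is
`X n`, for `n : Fin 4`. -/
noncomputable def expVec (i j k l : ℕ) : Fin 4 →₀ ℕ :=
  Finsupp.equivFunOnFinite.symm ![i, j, k, l]

lemma exists_eq_expVec (α : Fin 4 →₀ ℕ) : ∃ i j k l, α = expVec i j k l := by
  refine ⟨α 0, α 1, α 2, α 3, ?_⟩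
  ext n
  fin_cases n <;> rfl

@[simp]
lemma expVec_le_expVec_iff :
    expVec i j k l ≤ expVec p q r s ↔ i ≤ p ∧ j ≤ q ∧ k ≤ r ∧ l ≤ s := by
  simp [expVec, Finsupp.le_def, Fin.forall_fin_succ]

@[simp]
lemma expVec_inj : expVec i j k l = expVec p q r s ↔ i = p ∧ j = q ∧ k = r ∧ l = s := by
  simp [expVec, funext_iff, Fin.forall_fin_succ]

@[simp]
lemma degree_expVec : (expVec i j k l).degree = i + j + k + l := by
  simp [expVec, Finsupp.degree_eq_sum, Fin.sum_univ_succ, add_assoc]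

lemma monomial_expVec :
    monomial (expVec i j k l) (1 : R) = X 0 ^ i * X 1 ^ j * X 2 ^ k * X 3 ^ l := by
  rw [monomial_eq, Finsupp.prod_fintype _ _ (by simp), Fin.prod_univ_four]
  simp [expVec]

lemma monomial_mem_of_le {σ : Type*} {L : Ideal (MvPolynomial σ R)} {α β : σ →₀ ℕ}
    (hα : monomial α (1 : R) ∈ L) (hαβ : α ≤ β) : monomial β (1 : R) ∈ L :=
  L.mem_of_dvd (monomial_dvd_monomial.2 ⟨.inr hαβ, dvd_rfl⟩) hα

lemma idealOfVars_fin_four :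
    idealOfVars (Fin 4) R = Ideal.span {X 0, X 1, X 2, X 3} := by
  rw [idealOfVars]
  congr 1
  ext f
  simp [Fin.exists_fin_succ, eq_comm]

end FourVariables

section SymmetricIdeal

variable {a b c i j k l p q r s : ℕ}

/-- The exponents of the generators `x ^ c`, `x ^ b y ^ a`, `x ^ a y ^ b`, `y ^ c` of the symmetric
ideal. -/
noncomputable def symExp (a b c : ℕ) (i : Fin 4) : Fin 2 →₀ ℕ :=
  Finsupp.equivFunOnFinite.symm (![![c, 0], ![b, a], ![a, b], ![0, c]] i)

lemma weight_symExp_expVec : Finsupp.weight (symExp a b c) (expVec i j k l) =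
    Finsupp.equivFunOnFinite.symm ![c * i + b * j + a * k, a * j + b * k + c * l] := by
  rw [Finsupp.weight_apply, Finsupp.sum_fintype _ _ (by simp), Fin.sum_univ_four]
  ext n
  fin_cases n <;> simp [expVec, symExp, mul_comm]

lemma fiberEquiv_expVec_iff :
    FiberEquiv (symExp a b c) (expVec i j k l) (expVec p q r s) ↔
      p + q + r + s = i + j + k + l ∧
      c * p + b * q + a * r = c * i + b * j + a * k ∧
      a * q + b * r + c * s = a * j + b * k + c * l := by
  simp [FiberEquiv, weight_symExp_expVec, funext_iff, Fin.forall_fin_succ]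

lemma redundant_expVec_iff :
    Redundant (symExp a b c) (expVec i j k l) ↔ ∃ p q r s,
      p + q + r + s = i + j + k + l ∧
      c * p + b * q + a * r ≤ c * i + b * j + a * k ∧
      a * q + b * r + c * s ≤ a * j + b * k + c * l ∧
      (a + b) * (q + r) + c * (p + s) < (a + b) * (j + k) + c * (i + l) := by
  have hlt (p q r s) : Finsupp.weight (symExp a b c) (expVec p q r s) <
      Finsupp.weight (symExp a b c) (expVec i j k l) ↔
      c * p + b * q + a * r ≤ c * i + b * j + a * k ∧
      a * q + b * r + c * s ≤ a * j + b * k + c * l ∧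
      (a + b) * (q + r) + c * (p + s) < (a + b) * (j + k) + c * (i + l) := by
    rw [weight_symExp_expVec, weight_symExp_expVec, lt_iff_le_and_ne]
    simp only [Finsupp.le_def, funext_iff, Fin.forall_fin_two, ne_eq,
      Finsupp.equivFunOnFinite_symm_apply_apply, EmbeddingLike.apply_eq_iff_eq,
      Matrix.cons_val_zero, Matrix.cons_val_one]
    lia
  constructor
  · rintro ⟨β, hdeg, hβ⟩
    obtain ⟨p, q, r, s, rfl⟩ := exists_eq_expVec β
    exact ⟨p, q, r, s, by simpa using hdeg, (hlt p q r s).1 hβ⟩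
  · rintro ⟨p, q, r, s, hdeg, hβ⟩
    exact ⟨expVec p q r s, by simpa using hdeg, (hlt p q r s).2 hβ⟩

end SymmetricIdeal

section Mirror

variable {a b c i j k l p q r s : ℕ}

lemma Redundant.mirror (h : Redundant (symExp a b c) (expVec i j k l)) :
    Redundant (symExp a b c) (expVec l k j i) := by
  obtain ⟨p, q, r, s, hdeg, hx, hy, hlt⟩ := redundant_expVec_iff.1 h
  exact redundant_expVec_iff.2 ⟨s, r, q, p, by lia, by lia, by lia, by lia⟩

lemma FiberEquiv.mirror (h : FiberEquiv (symExp a b c) (expVec i j k l) (expVec p q r s)) :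
    FiberEquiv (symExp a b c) (expVec l k j i) (expVec s r q p) := by
  obtain ⟨hdeg, hx, hy⟩ := fiberEquiv_expVec_iff.1 h
  exact fiberEquiv_expVec_iff.2 ⟨by lia, by lia, by lia⟩

lemma isolated_expVec (hred : ¬ Redundant (symExp a b c) (expVec i j k l))
    (heq : ∀ p q r s, FiberEquiv (symExp a b c) (expVec i j k l) (expVec p q r s) →
      p = i ∧ q = j ∧ r = k ∧ s = l) : Isolated (symExp a b c) (expVec i j k l) := by
  refine ⟨hred, fun β hβ ↦ ?_⟩
  obtain ⟨p, q, r, s, rfl⟩ := exists_eq_expVec β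
  exact expVec_inj.2 (heq p q r s hβ)

lemma Isolated.mirror (h : Isolated (symExp a b c) (expVec i j k l)) :
    Isolated (symExp a b c) (expVec l k j i) := by
  refine isolated_expVec (fun hred ↦ h.1 hred.mirror) fun p q r s hβ ↦ ?_
  have := expVec_inj.1 (h.2 _ hβ.mirror)
  lia

lemma FiberEquiv.outer_inner (hc : c ≠ a + b)
    (h : FiberEquiv (symExp a b c) (expVec i j k l) (expVec p q r s)) :
    p + s = i + l ∧ q + r = j + k ∧ (c : ℤ) * (p - i) = (b - a) * (j - q) := by
  obtain ⟨hdeg, hx, hy⟩ := fiberEquiv_expVec_iff.1 h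
  zify at hdeg hx hy hc ⊢
  have hprod : ((c : ℤ) - (a + b)) * ((p + s) - (i + l)) = 0 := by
    linear_combination hx + hy - (a + b) * hdeg
  have houter : (p + s : ℤ) = i + l :=
    sub_eq_zero.1 ((mul_eq_zero.1 hprod).resolve_left (sub_ne_zero.2 hc))
  have hinner : (q + r : ℤ) = j + k := by linarith
  exact ⟨houter, hinner, by linear_combination hx - a * hinner⟩

lemma isolated_inner (hab : a < b) (hc : c ≠ a + b)
    (hred : ¬ Redundant (symExp a b c) (expVec 0 j k 0)) :
    Isolated (symExp a b c) (expVec 0 j k 0) := by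
  refine isolated_expVec hred fun p q r s hβ ↦ ?_
  obtain ⟨houter, hinner, hprod⟩ := hβ.outer_inner hc
  obtain ⟨rfl, rfl⟩ : p = 0 ∧ s = 0 := by lia
  have hjq : (b - a : ℤ) * (j - q) = 0 := by rw [← hprod]; simp
  have := (mul_eq_zero.1 hjq).resolve_left (by lia)
  lia

end Mirror

section SmallDegree

variable {K : Type*} [Field K] {a b c r : ℕ} {J : Ideal (MvPolynomial (Fin 4) K)}

lemma redundant_inner_pair (h : c < a + b) :
    Redundant (symExp a b c) (expVec 0 1 1 0) :=
  redundant_expVec_iff.2 ⟨1, 0, 0, 1, by lia, by lia, by lia, by lia⟩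

lemma redundant_pow_inner (hbc : b < c) (h : c < a + b) :
    Redundant (symExp a b c) (expVec 0 c 0 0) := by
  obtain ⟨d, rfl⟩ := Nat.exists_eq_add_of_lt hbc
  refine redundant_expVec_iff.2 ⟨b, 0, 0, d + 1, by lia, by lia, ?_, ?_⟩
  · nlinarith
  · nlinarith

lemma not_redundant_inner (hab : a < b) (hbc : b < c) :
    ¬ Redundant (symExp a b c) (expVec 0 1 0 0) := by
  rw [redundant_expVec_iff]
  rintro ⟨p, q, r, s, hdeg, hx, hy, hlt⟩
  obtain rfl | rfl : p = 0 ∨ p = 1 := by lia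
  · obtain rfl | rfl : s = 0 ∨ s = 1 := by lia
    · obtain ⟨rfl, rfl⟩ | ⟨rfl, rfl⟩ : (q = 1 ∧ r = 0) ∨ (q = 0 ∧ r = 1) := by lia
      all_goals lia
    · lia
  · lia

lemma exists_minimal_redundant_inner (hab : a < b) (hbc : b < c) (h : c < a + b) :
    ∃ r, 2 ≤ r ∧ Redundant (symExp a b c) (expVec 0 r 0 0) ∧
      ∀ j < r, Isolated (symExp a b c) (expVec 0 j 0 0) := by
  classical
  have hex : ∃ r, Redundant (symExp a b c) (expVec 0 r 0 0) := ⟨c, redundant_pow_inner hbc h⟩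
  refine ⟨Nat.find hex, ?_, Nat.find_spec hex, fun j hj ↦
    isolated_inner hab h.ne (Nat.find_min hex hj)⟩
  by_contra hlt
  exact not_redundant_inner hab hbc ((Nat.find_spec hex).mono
    (expVec_le_expVec_iff.2 ⟨le_rfl, by lia, le_rfl, le_rfl⟩))

/-- The exponents of `z₂ z₃`, `z₂ ^ r`, `z₃ ^ r`. -/
noncomputable def innerGens (r : ℕ) : Fin 3 → Fin 4 →₀ ℕ :=
  ![expVec 0 1 1 0, expVec 0 r 0 0, expVec 0 0 r 0]

lemma span_innerGens (r : ℕ) :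
    Ideal.span (Set.range fun t ↦ monomial (innerGens r t) (1 : K)) =
      Ideal.span {X 1 * X 2, X 1 ^ r * X 0 ^ 0, X 2 ^ r * X 3 ^ 0} := by
  congr 1
  ext f
  simp [Fin.exists_fin_succ, innerGens, monomial_expVec, eq_comm]

lemma isolated_of_lt_innerGens (hr : 2 ≤ r)
    (hiso : ∀ j < r, Isolated (symExp a b c) (expVec 0 j 0 0)) (t : Fin 3) {β : Fin 4 →₀ ℕ}
    (hβ : β < innerGens r t) : Isolated (symExp a b c) β := by
  obtain ⟨i, j, k, l, rfl⟩ := exists_eq_expVec β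
  suffices i = 0 ∧ l = 0 ∧ (j = 0 ∧ k < r ∨ k = 0 ∧ j < r) by
    obtain ⟨rfl, rfl, ⟨rfl, hk⟩ | ⟨rfl, hj⟩⟩ := this
    exacts [(hiso k hk).mirror, hiso j hj]
  rw [lt_iff_le_and_ne] at hβ
  fin_cases t <;> simp [innerGens] at hβ <;> lia

lemma IsFiberConeIdeal.le_of_innerGens (hJ : IsFiberConeIdeal (symExp a b c) J)
    (hiso : ∀ j < r, Isolated (symExp a b c) (expVec 0 j 0 0)) {L : Ideal (MvPolynomial (Fin 4) K)}
    (h0 : X 0 ∈ L) (h3 : X 3 ∈ L)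
    (hL : ∀ t, monomial (innerGens r t) 1 ∈ L) : J ≤ L := by
  have hX0 : monomial (expVec 1 0 0 0) 1 ∈ L := by simpa [monomial_expVec]
  have hX3 : monomial (expVec 0 0 0 1) 1 ∈ L := by simpa [monomial_expVec]
  refine le_of_forall_coeff_ne_zero fun f hf α hα ↦ ?_
  obtain ⟨i, j, k, l, rfl⟩ := exists_eq_expVec α
  by_cases hi : 1 ≤ i
  · exact monomial_mem_of_le hX0 (by simpa)
  by_cases hl : 1 ≤ l
  · exact monomial_mem_of_le hX3 (by simpa)
  by_cases hjk : 1 ≤ j ∧ 1 ≤ k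
  · exact monomial_mem_of_le (hL 0) (by simpa [innerGens])
  by_cases hj : r ≤ j
  · exact monomial_mem_of_le (hL 1) (by simpa [innerGens])
  by_cases hk : r ≤ k
  · exact monomial_mem_of_le (hL 2) (by simpa [innerGens])
  obtain ⟨rfl, rfl, rfl | rfl⟩ : i = 0 ∧ l = 0 ∧ (j = 0 ∨ k = 0) := by lia
  · exact absurd (hJ.coeff_eq_zero hf (hiso k (by lia)).mirror) hα
  · exact absurd (hJ.coeff_eq_zero hf (hiso j (by lia))) hα

lemma idealOfVars_le_radical_of_innerGens {S : Ideal (MvPolynomial (Fin 4) K)} (h0 : X 0 ∈ S)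
    (h3 : X 3 ∈ S) (hS : ∀ t, monomial (innerGens r t) 1 ∈ S) :
    idealOfVars (Fin 4) K ≤ S.radical := by
  rw [idealOfVars_fin_four, Ideal.span_le]
  rintro _ (rfl | rfl | rfl | rfl)
  · exact Ideal.le_radical h0
  · exact ⟨r, by simpa [innerGens, monomial_expVec] using hS 1⟩
  · exact ⟨r, by simpa [innerGens, monomial_expVec] using hS 2⟩
  · exact Ideal.le_radical h3

theorem hasRegularPair_iff_of_lt (hab : a < b) (hbc : b < c) (h : c < a + b)
    (hJ : IsFiberConeIdeal (symExp a b c) J) :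
    HasRegularPair J ↔ ∃ G : Finset (MvPolynomial (Fin 4) K), G.card ≤ 3 ∧
      J = Ideal.span (G : Set (MvPolynomial (Fin 4) K)) := by
  obtain ⟨r, hr, hred, hiso⟩ := exists_minimal_redundant_inner hab hbc h
  set L := Ideal.span (Set.range fun t ↦ monomial (innerGens r t) (1 : K)) with hL
  set S := L ⊔ Ideal.span {X 0, X 3}
  have gen_mem (t) : monomial (innerGens r t) (1 : K) ∈ S :=
    Ideal.mem_sup_left (Ideal.subset_span ⟨t, rfl⟩)
  have h0 : X 0 ∈ S := Ideal.mem_sup_right (Ideal.subset_span (by simp))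
  have h3 : X 3 ∈ S := Ideal.mem_sup_right (Ideal.subset_span (by simp))
  refine hasRegularPair_iff_exists_card_le (μ := innerGens r) hJ.isHomogeneous ?_ ?_
    (fun t ↦ hJ.vanishesBelow fun β ↦ isolated_of_lt_innerGens hr hiso t)
    (X_mem_idealOfVars 0) (X_mem_idealOfVars 3) hL ?_ ?_ ?_
  · intro t u
    fin_cases t <;> fin_cases u <;> simp [innerGens] <;> lia
  · intro t
    refine hJ.monomial_mem ?_
    fin_cases t
    exacts [redundant_inner_pair h, hred, hred.mirror]
  · obtain ⟨n, rfl⟩ := Nat.exists_eq_add_of_lt (show 0 < r by lia)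
    rw [hL, span_innerGens, zero_add]
    exact hasRegularPair_span_triple (by decide) n 0
  · exact idealOfVars_le_radical_of_innerGens h0 h3 gen_mem
  · exact hJ.le_of_innerGens hiso h0 h3 gen_mem

end SmallDegree

section LargeDegree

variable {K : Type*} [Field K] {a b c i k n m u t : ℕ} {J : Ideal (MvPolynomial (Fin 4) K)}

lemma redundant_outer_pair (h : a + b < c) : Redundant (symExp a b c) (expVec 1 0 0 1) :=
  redundant_expVec_iff.2 ⟨0, 1, 1, 0, by lia, by lia, by lia, by lia⟩

lemma redundant_pow_mul_pow (hab : a < b) (h : a + b < c) :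
    Redundant (symExp a b c) (expVec (b - a) 0 a 0) := by
  obtain ⟨d, rfl⟩ := Nat.exists_eq_add_of_lt hab
  obtain ⟨d', rfl⟩ := Nat.exists_eq_add_of_lt h
  rw [show a + d + 1 - a = d + 1 by lia]
  exact redundant_expVec_iff.2 ⟨0, a + d + 1, 0, 0, by lia, by nlinarith, by lia, by nlinarith⟩

lemma redundant_of_mul_eq_mul (h : a + b < c) (hut : c * (u + 1) + a * (t + 1) = b * (t + 1)) :
    Redundant (symExp a b c) (expVec (u + 2) 0 t 0) :=
  redundant_expVec_iff.2 ⟨0, t + 2, 0, u, by lia, by lia, by lia, by lia⟩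

lemma not_redundant_pow_outer (ha : 0 < a) (hab : a < b) (h : a + b < c) :
    ¬ Redundant (symExp a b c) (expVec n 0 0 0) := by
  rw [redundant_expVec_iff]
  rintro ⟨p, q, r, s, hdeg, hx, hy, hlt⟩
  obtain ⟨⟨hq, hr⟩, hs⟩ : (q = 0 ∧ r = 0) ∧ s = 0 := by
    simpa [ha.ne', (ha.trans hab).ne', (Nat.zero_lt_of_lt h).ne'] using hy
  subst hq hr hs
  lia

lemma not_redundant_pow_inner (h : a + b < c) :
    ¬ Redundant (symExp a b c) (expVec 0 0 m 0) := by
  rw [redundant_expVec_iff]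
  rintro ⟨p, q, r, s, hdeg, -, -, hlt⟩
  have hle := Nat.mul_le_mul_right (p + s) h.le
  have : (a + b) * (p + q + r + s) = (a + b) * m := by rw [hdeg]; ring
  lia

lemma isolated_of_forall_not_redundant (hab : a < b) (h : a + b < c)
    (hred : ∀ i' k', i' + k' ≤ i + k → ¬ Redundant (symExp a b c) (expVec i' 0 k' 0)) :
    Isolated (symExp a b c) (expVec i 0 k 0) := by
  refine isolated_expVec (hred i k le_rfl) fun p q r s hβ ↦ ?_
  obtain ⟨houter, hinner, hprod⟩ := hβ.outer_inner h.ne'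
  obtain rfl | hs := s.eq_zero_or_pos
  · obtain rfl : p = i := by lia
    have := (mul_eq_zero.1 (hprod.symm.trans (by simp))).resolve_left (by lia)
    lia
  obtain ⟨u, rfl⟩ := Nat.exists_eq_add_of_lt hs
  have hq : q ≠ 0 := by
    rintro rfl
    have := (mul_eq_zero.1 (hprod.trans (by simp))).resolve_left (by lia)
    lia
  obtain ⟨t, rfl⟩ := Nat.exists_eq_succ_of_ne_zero hq
  refine absurd (redundant_of_mul_eq_mul h ?_) (hred (u + 2) t (by lia))
  zify at houter ⊢
  push_cast at hprod
  linear_combination -hprod + c * houter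

lemma exists_minimal_redundant_outer (ha : 0 < a) (hab : a < b) (h : a + b < c) :
    ∃ n m, 0 < n ∧ 0 < m ∧ Redundant (symExp a b c) (expVec n 0 m 0) ∧
      ∀ i k, i + k < n + m → Isolated (symExp a b c) (expVec i 0 k 0) := by
  classical
  have hex : ∃ d n m, n + m = d ∧ Redundant (symExp a b c) (expVec n 0 m 0) :=
    ⟨_, _, _, rfl, redundant_pow_mul_pow hab h⟩
  obtain ⟨n, m, hnm, hred⟩ := Nat.find_spec hex
  refine ⟨n, m, Nat.pos_of_ne_zero ?_, Nat.pos_of_ne_zero ?_, hred, fun i k hik ↦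
    isolated_of_forall_not_redundant hab h fun i' k' hle hred' ↦
      Nat.find_min hex (by rw [← hnm]; exact hle.trans_lt hik) ⟨i', k', rfl, hred'⟩⟩
  · rintro rfl
    exact not_redundant_pow_inner h hred
  · rintro rfl
    exact not_redundant_pow_outer ha hab h hred

/-- The exponents of `z₁ z₄`, `z₁ ^ n z₃ ^ m`, `z₂ ^ m z₄ ^ n`. -/
noncomputable def outerGens (n m : ℕ) : Fin 3 → Fin 4 →₀ ℕ :=
  ![expVec 1 0 0 1, expVec n 0 m 0, expVec 0 m 0 n]

lemma span_outerGens (n m : ℕ) :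
    Ideal.span (Set.range fun t ↦ monomial (outerGens n m t) (1 : K)) =
      Ideal.span {X 0 * X 3, X 0 ^ n * X 2 ^ m, X 3 ^ n * X 1 ^ m} := by
  rw [mul_comm (X 3 ^ n)]
  congr 1
  ext f
  simp [Fin.exists_fin_succ, outerGens, monomial_expVec, eq_comm]

lemma isolated_of_lt_outerGens (hn : 0 < n) (hm : 0 < m)
    (hiso : ∀ i k, i + k < n + m → Isolated (symExp a b c) (expVec i 0 k 0)) (t : Fin 3)
    {β : Fin 4 →₀ ℕ} (hβ : β < outerGens n m t) : Isolated (symExp a b c) β := by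
  obtain ⟨i, j, k, l, rfl⟩ := exists_eq_expVec β
  suffices j = 0 ∧ l = 0 ∧ i + k < n + m ∨ i = 0 ∧ k = 0 ∧ l + j < n + m by
    obtain ⟨rfl, rfl, hik⟩ | ⟨rfl, rfl, hlj⟩ := this
    exacts [hiso i k hik, (hiso l j hlj).mirror]
  rw [lt_iff_le_and_ne] at hβ
  fin_cases t <;> simp [outerGens] at hβ <;> lia

lemma pow_mul_pow_mul_mem_iff {R : Type*} [CommRing R] {S : Ideal R} {x z : R} (hxz : x + z ∈ S)
    (i k : ℕ) (r : R) : x ^ i * z ^ k * r ∈ S ↔ x ^ (i + k) * r ∈ S := by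
  have hz : Ideal.Quotient.mk S z = -Ideal.Quotient.mk S x := by
    rw [eq_neg_iff_add_eq_zero, add_comm, ← map_add]
    exact Ideal.Quotient.eq_zero_iff_mem.2 hxz
  rw [← Ideal.Quotient.eq_zero_iff_mem, ← Ideal.Quotient.eq_zero_iff_mem]
  simp only [map_mul, map_pow, hz]
  rw [neg_pow, pow_add, show ∀ A B C D : R ⧸ S, A * (B * C) * D = B * (A * C * D) by intros; ring,
    (isUnit_neg_one.pow k).mul_right_eq_zero]

lemma pow_mem_of_add_mem {R : Type*} [CommRing R] {S : Ideal R} {x z : R} (hxz : x + z ∈ S)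
    {d : ℕ} (hx : x ^ d ∈ S) : z ^ d ∈ S := by
  simpa using (pow_mul_pow_mul_mem_iff hxz 0 d 1).2 (by simpa)

lemma monomial_expVec_mem_iff {S : Ideal (MvPolynomial (Fin 4) K)} (h02 : X 0 + X 2 ∈ S)
    (h13 : X 1 + X 3 ∈ S) (i j k l : ℕ) :
    monomial (expVec i j k l) 1 ∈ S ↔ X 0 ^ (i + k) * X 1 ^ (j + l) ∈ S := by
  rw [monomial_expVec, show (X 0 ^ i * X 1 ^ j * X 2 ^ k * X 3 ^ l : MvPolynomial (Fin 4) K) =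
    X 0 ^ i * X 2 ^ k * (X 1 ^ j * X 3 ^ l) by ring, pow_mul_pow_mul_mem_iff h02, mul_comm,
    pow_mul_pow_mul_mem_iff h13, mul_comm]

lemma IsFiberConeIdeal.le_of_outerGens (hJ : IsFiberConeIdeal (symExp a b c) J)
    (hiso : ∀ i k, i + k < n + m → Isolated (symExp a b c) (expVec i 0 k 0))
    {S : Ideal (MvPolynomial (Fin 4) K)} (h01 : X 0 * X 1 ∈ S) (h0 : X 0 ^ (n + m) ∈ S)
    (h1 : X 1 ^ (n + m) ∈ S) (h02 : X 0 + X 2 ∈ S) (h13 : X 1 + X 3 ∈ S) : J ≤ S := by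
  refine le_of_forall_coeff_ne_zero fun f hf α hα ↦ ?_
  obtain ⟨i, j, k, l, rfl⟩ := exists_eq_expVec α
  rw [monomial_expVec_mem_iff h02 h13]
  by_cases hpos : i + k ≠ 0 ∧ j + l ≠ 0
  · exact S.mem_of_dvd (mul_dvd_mul (dvd_pow_self _ hpos.1) (dvd_pow_self _ hpos.2)) h01
  by_cases hik : n + m ≤ i + k
  · exact S.mul_mem_right _ (S.mem_of_dvd (pow_dvd_pow _ hik) h0)
  by_cases hjl : n + m ≤ j + l
  · exact S.mul_mem_left _ (S.mem_of_dvd (pow_dvd_pow _ hjl) h1)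
  obtain ⟨rfl, rfl⟩ | ⟨rfl, rfl⟩ : (j = 0 ∧ l = 0) ∨ (i = 0 ∧ k = 0) := by lia
  · exact absurd (hJ.coeff_eq_zero hf (hiso i k (by lia))) hα
  · exact absurd (hJ.coeff_eq_zero hf (hiso l j (by lia)).mirror) hα

theorem hasRegularPair_iff_of_gt (ha : 0 < a) (hab : a < b) (h : a + b < c)
    (hJ : IsFiberConeIdeal (symExp a b c) J) :
    HasRegularPair J ↔ ∃ G : Finset (MvPolynomial (Fin 4) K), G.card ≤ 3 ∧
      J = Ideal.span (G : Set (MvPolynomial (Fin 4) K)) := by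
  obtain ⟨n, m, hn, hm, hred, hiso⟩ := exists_minimal_redundant_outer ha hab h
  set L := Ideal.span (Set.range fun t ↦ monomial (outerGens n m t) (1 : K)) with hL
  set S := L ⊔ Ideal.span {X 0 + X 2, X 1 + X 3}
  have gen_mem (t) : monomial (outerGens n m t) (1 : K) ∈ S :=
    Ideal.mem_sup_left (Ideal.subset_span ⟨t, rfl⟩)
  have h02 : X 0 + X 2 ∈ S := Ideal.mem_sup_right (Ideal.subset_span (by simp))
  have h13 : X 1 + X 3 ∈ S := Ideal.mem_sup_right (Ideal.subset_span (by simp))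
  have h01 : X 0 * X 1 ∈ S := by
    simpa using (monomial_expVec_mem_iff h02 h13 1 0 0 1).1 (gen_mem 0)
  have h0 : X 0 ^ (n + m) ∈ S := by
    simpa using (monomial_expVec_mem_iff h02 h13 n 0 m 0).1 (gen_mem 1)
  have h1 : X 1 ^ (n + m) ∈ S := by
    simpa [add_comm] using (monomial_expVec_mem_iff h02 h13 0 m 0 n).1 (gen_mem 2)
  refine hasRegularPair_iff_exists_card_le (μ := outerGens n m) hJ.isHomogeneous ?_ ?_
    (fun t ↦ hJ.vanishesBelow fun β ↦ isolated_of_lt_outerGens hn hm hiso t)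
    (Ideal.add_mem _ (X_mem_idealOfVars 0) (X_mem_idealOfVars 2))
    (Ideal.add_mem _ (X_mem_idealOfVars 1) (X_mem_idealOfVars 3)) hL ?_ ?_
    (hJ.le_of_outerGens hiso h01 h0 h1 h02 h13)
  · intro t u
    fin_cases t <;> fin_cases u <;> simp [outerGens] <;> lia
  · intro t
    refine hJ.monomial_mem ?_
    fin_cases t
    exacts [redundant_outer_pair h, hred, hred.mirror]
  · obtain ⟨n, rfl⟩ := Nat.exists_eq_add_of_lt hn
    rw [hL, span_outerGens, zero_add]
    exact hasRegularPair_span_triple (by decide) n m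
  · rw [idealOfVars_fin_four, Ideal.span_le]
    rintro _ (rfl | rfl | rfl | rfl)
    exacts [⟨_, h0⟩, ⟨_, h1⟩, ⟨_, pow_mem_of_add_mem h02 h0⟩, ⟨_, pow_mem_of_add_mem h13 h1⟩]

end LargeDegree

section BalancedDegree

variable {K : Type*} [Field K] {a b d i j k l p q r s : ℕ} {J : Ideal (MvPolynomial (Fin 4) K)}

lemma not_redundant_of_balanced (a b : ℕ) (α : Fin 4 →₀ ℕ) :
    ¬ Redundant (symExp a b (a + b)) α := by
  obtain ⟨i, j, k, l, rfl⟩ := exists_eq_expVec α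
  rw [redundant_expVec_iff]
  rintro ⟨p, q, r, s, hdeg, -, -, hlt⟩
  rw [← mul_add, ← mul_add, show q + r + (p + s) = j + k + (i + l) by lia] at hlt
  exact lt_irrefl _ hlt

lemma FiberEquiv.exists_multiple (hb : 0 < b) (hco : Nat.Coprime a b)
    (h : FiberEquiv (symExp a b (a + b)) (expVec i j k l) (expVec p q r s)) :
    ∃ t : ℤ, (i + j - p - q : ℤ) = a * t ∧ (p + r - i - k : ℤ) = b * t := by
  obtain ⟨-, hx, -⟩ := fiberEquiv_expVec_iff.1 h
  zify at hx
  have hprod : (a : ℤ) * (p + r - i - k) = b * (i + j - p - q) := by linear_combination hx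
  obtain ⟨t, ht⟩ : (b : ℤ) ∣ p + r - i - k :=
    (Nat.isCoprime_iff_coprime.2 hco).symm.dvd_of_dvd_mul_left ⟨_, hprod⟩
  refine ⟨t, mul_left_cancel₀ (show (b : ℤ) ≠ 0 by lia) ?_, ht⟩
  rw [← hprod, ht, mul_left_comm]

lemma isolated_of_add_lt (hco : Nat.Coprime a b) (hjl : j + l < b) :
    Isolated (symExp a b (a + b)) (expVec 0 j 0 l) := by
  refine isolated_expVec (not_redundant_of_balanced a b _) fun p q r s hβ ↦ ?_
  obtain ⟨t, hj, hpr⟩ := hβ.exists_multiple (by lia) hco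
  have hdeg := (fiberEquiv_expVec_iff.1 hβ).1
  obtain ht | rfl | ht := lt_trichotomy t 0
  · have : (b : ℤ) * t < 0 := mul_neg_of_pos_of_neg (by lia) ht
    lia
  · lia
  · have : (b : ℤ) * 1 ≤ b * t := mul_le_mul_of_nonneg_left ht (by lia)
    lia

/-- The leading exponents of the four binomials `z₁ z₄ - z₂ z₃`, `z₂ ^ b - z₁ ^ (b - a) z₃ ^ a`,
`z₃ ^ b - z₂ ^ a z₄ ^ (b - a)`, `z₂ ^ (a + 1) z₄ ^ (b - a - 1) - z₁ z₃ ^ (b - 1)`, where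
`b = a + d + 1`. For `d = 0` the last one coincides with the second. -/
noncomputable def leadExp (a d : ℕ) : Fin 4 → Fin 4 →₀ ℕ :=
  ![expVec 1 0 0 1, expVec 0 (a + d + 1) 0 0, expVec 0 0 (a + d + 1) 0, expVec 0 (a + 1) 0 d]

/-- The exponents of the subtracted terms of the binomials in `leadExp`. -/
noncomputable def tailExp (a d : ℕ) : Fin 4 → Fin 4 →₀ ℕ :=
  ![expVec 0 1 1 0, expVec (d + 1) 0 a 0, expVec 0 a 0 (d + 1), expVec 1 0 (a + d) 0]

/-- The binomials with leading exponents `leadExp` and subtracted exponents `tailExp`. -/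
noncomputable def binomialGens (K : Type*) [Field K] (a d : ℕ) (t : Fin 4) :
    MvPolynomial (Fin 4) K :=
  monomial (leadExp a d t) 1 - monomial (tailExp a d t) 1

lemma fiberEquiv_leadExp_tailExp (a d : ℕ) (t : Fin 4) :
    FiberEquiv (symExp a (a + d + 1) (a + (a + d + 1))) (leadExp a d t) (tailExp a d t) := by
  fin_cases t <;> refine fiberEquiv_expVec_iff.2 ⟨?_, ?_, ?_⟩ <;> ring

lemma isHomogeneous_binomialGens (a d : ℕ) (t : Fin 4) :
    (binomialGens K a d t).IsHomogeneous (leadExp a d t).degree :=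
  (isHomogeneous_monomial 1 rfl).sub
    (isHomogeneous_monomial 1 (fiberEquiv_leadExp_tailExp a d t).1)

lemma innerGens_mem_of_binomialGens_mem {S : Ideal (MvPolynomial (Fin 4) K)}
    (h0 : X 0 ∈ S) (h3 : X 3 ∈ S) (hS : ∀ t : Fin 3, binomialGens K a d t.castSucc ∈ S)
    (t : Fin 3) : monomial (innerGens (a + d + 1) t) 1 ∈ S := by
  have hX0 : monomial (expVec 1 0 0 0) 1 ∈ S := by simpa [monomial_expVec]
  have hX3 : monomial (expVec 0 0 0 1) 1 ∈ S := by simpa [monomial_expVec]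
  fin_cases t
  · exact (S.sub_mem_iff_right (monomial_mem_of_le hX0 (by simp [leadExp]))).1 (hS 0)
  · exact (S.sub_mem_iff_left (monomial_mem_of_le hX0 (by simp [tailExp]))).1 (hS 1)
  · exact (S.sub_mem_iff_left (monomial_mem_of_le hX3 (by simp [tailExp]))).1 (hS 2)

lemma IsFiberConeIdeal.binomialGens_mem
    (hJ : IsFiberConeIdeal (symExp a (a + d + 1) (a + (a + d + 1))) J) (t : Fin 4) :
    binomialGens K a d t ∈ J :=
  hJ.monomial_sub_mem (fiberEquiv_leadExp_tailExp a d t)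

lemma IsFiberConeIdeal.vanishesBelow_leadExp
    (hJ : IsFiberConeIdeal (symExp a (a + d + 1) (a + (a + d + 1))) J) (ha : 0 < a)
    (hco : Nat.Coprime a (a + d + 1)) (t : Fin 4) : VanishesBelow J (leadExp a d t) := by
  refine hJ.vanishesBelow fun β hβ ↦ ?_
  obtain ⟨i, j, k, l, rfl⟩ := exists_eq_expVec β
  suffices i = 0 ∧ k = 0 ∧ j + l < a + d + 1 ∨ j = 0 ∧ l = 0 ∧ k + i < a + d + 1 by
    obtain ⟨rfl, rfl, hjl⟩ | ⟨rfl, rfl, hki⟩ := this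
    exacts [isolated_of_add_lt hco hjl, (isolated_of_add_lt hco hki).mirror]
  rw [lt_iff_le_and_ne] at hβ
  fin_cases t <;> simp [leadExp] at hβ <;> lia

lemma coeffVec_leadExp_binomialGens (hd : 0 < d) (t : Fin 4) :
    coeffVec K (leadExp a d) (binomialGens K a d t) = Pi.single t 1 := by
  have hlead (u) : leadExp a d t = leadExp a d u ↔ u = t := by
    fin_cases t <;> fin_cases u <;> simp [leadExp] <;> lia
  have htail (u) : tailExp a d t ≠ leadExp a d u := by
    fin_cases t <;> fin_cases u <;> simp [leadExp, tailExp]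
  ext u
  simp [binomialGens, coeff_monomial, Pi.single_apply, hlead, htail]

lemma IsFiberConeIdeal.not_exists_card_le_three
    (hJ : IsFiberConeIdeal (symExp a (a + d + 1) (a + (a + d + 1))) J) (ha : 0 < a) (hd : 0 < d)
    (hco : Nat.Coprime a (a + d + 1)) :
    ¬ ∃ G : Finset (MvPolynomial (Fin 4) K), G.card ≤ 3 ∧
      J = Ideal.span (G : Set (MvPolynomial (Fin 4) K)) := by
  rintro ⟨G, hG, hJG⟩
  have h4 := card_le_card_of_coeffVec_eq_single hJG (hJ.vanishesBelow_leadExp ha hco)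
    hJ.binomialGens_mem (coeffVec_leadExp_binomialGens hd)
  rw [Fintype.card_fin] at h4
  lia

lemma IsFiberConeIdeal.idealOfVars_le_radical
    (hJ : IsFiberConeIdeal (symExp a (a + d + 1) (a + (a + d + 1))) J) :
    idealOfVars (Fin 4) K ≤ (J ⊔ Ideal.span {X 0, X 3}).radical :=
  have h0 : X 0 ∈ J ⊔ Ideal.span {X 0, X 3} := Ideal.mem_sup_right (Ideal.subset_span (by simp))
  have h3 : X 3 ∈ J ⊔ Ideal.span {X 0, X 3} := Ideal.mem_sup_right (Ideal.subset_span (by simp))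
  idealOfVars_le_radical_of_innerGens h0 h3 (innerGens_mem_of_binomialGens_mem h0 h3
    fun t ↦ Ideal.mem_sup_left (hJ.binomialGens_mem t.castSucc))

lemma IsFiberConeIdeal.not_hasRegularPair
    (hJ : IsFiberConeIdeal (symExp a (a + d + 1) (a + (a + d + 1))) J) (hd : 0 < d)
    (hco : Nat.Coprime a (a + d + 1)) : ¬ HasRegularPair J := by
  intro hCM
  have hreg := hCM.isWeaklyRegular hJ.isHomogeneous (X_mem_idealOfVars 3)
    hJ.idealOfVars_le_radical
  have hmul : X 3 ^ d * X 1 ^ (a + 1) ∈ J ⊔ Ideal.span {(X 0 : MvPolynomial (Fin 4) K)} := by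
    rw [show (X 3 ^ d * X 1 ^ (a + 1) : MvPolynomial (Fin 4) K) =
      binomialGens K a d 3 + X 2 ^ (a + d) * X 0 by
        simp [binomialGens, leadExp, tailExp, monomial_expVec]; ring]
    exact Submodule.add_mem_sup (hJ.binomialGens_mem 3)
      (Ideal.mul_mem_left _ _ (Ideal.mem_span_singleton_self _))
  obtain ⟨f, hf, _, hg, hfg⟩ := Submodule.mem_sup.1
    (mem_of_pow_mul_mem (isWeaklyRegular_mk_pair_iff.1 hreg).2 d hmul)
  obtain ⟨g, rfl⟩ := Ideal.mem_span_singleton'.1 hg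
  have hiso := isolated_of_add_lt hco (show a + 1 + 0 < a + d + 1 by lia)
  have hX1 : (X 1 ^ (a + 1) : MvPolynomial (Fin 4) K) = monomial (expVec 0 (a + 1) 0 0) 1 := by
    simp [monomial_expVec]
  have hcoeff := congrArg (coeff (expVec 0 (a + 1) 0 0)) hfg
  rw [coeff_add, hJ.coeff_eq_zero hf hiso, coeff_mul_X', if_neg (by simp [expVec]), hX1,
    coeff_monomial, if_pos rfl, add_zero] at hcoeff
  exact zero_ne_one hcoeff

end BalancedDegree

section ConsecutiveExponents

variable {K : Type*} [Field K] {a : ℕ} {J : Ideal (MvPolynomial (Fin 4) K)}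

/-- The exponents of the monomials divisible by none of `z₂ z₃`, `z₂ ^ (a + 1)`,
`z₃ ^ (a + 1)`. -/
def normalExps (a : ℕ) : Set (Fin 4 →₀ ℕ) :=
  {α | (α 1 = 0 ∨ α 2 = 0) ∧ α 1 ≤ a ∧ α 2 ≤ a}

@[simp]
lemma expVec_mem_normalExps {i j k l : ℕ} :
    expVec i j k l ∈ normalExps a ↔ (j = 0 ∨ k = 0) ∧ j ≤ a ∧ k ≤ a :=
  Iff.rfl

lemma exists_fiberEquiv_mem_normalExps (a i j k l : ℕ) :
    ∃ β ∈ normalExps a, FiberEquiv (symExp a (a + 1) (a + (a + 1))) (expVec i j k l) β := by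
  induction hN : j + k using Nat.strong_induction_on generalizing i j k l with
  | _ N ih =>
  have reduce {p q r s} (hlt : q + r < N) (h : FiberEquiv (symExp a (a + 1) (a + (a + 1)))
      (expVec i j k l) (expVec p q r s)) :
      ∃ β ∈ normalExps a, FiberEquiv (symExp a (a + 1) (a + (a + 1))) (expVec i j k l) β := by
    obtain ⟨β, hβ, hequiv⟩ := ih _ hlt p q r s rfl
    exact ⟨β, hβ, h.trans hequiv⟩
  by_cases hnormal : (j = 0 ∨ k = 0) ∧ j ≤ a ∧ k ≤ a
  · exact ⟨_, expVec_mem_normalExps.2 hnormal, rfl, rfl⟩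
  obtain ⟨hj, hk⟩ | hj | hk : (0 < j ∧ 0 < k) ∨ a < j ∨ a < k := by lia
  · obtain ⟨j, rfl⟩ := Nat.exists_eq_add_of_lt hj
    obtain ⟨k, rfl⟩ := Nat.exists_eq_add_of_lt hk
    refine reduce (p := i + 1) (q := j) (r := k) (s := l + 1) (by lia)
      (fiberEquiv_expVec_iff.2 ⟨?_, ?_, ?_⟩) <;> ring
  · obtain ⟨j, rfl⟩ := Nat.exists_eq_add_of_lt hj
    refine reduce (p := i + 1) (q := j) (r := k + a) (s := l) (by lia)
      (fiberEquiv_expVec_iff.2 ⟨?_, ?_, ?_⟩) <;> ring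
  · obtain ⟨k, rfl⟩ := Nat.exists_eq_add_of_lt hk
    refine reduce (p := i) (q := j + a) (r := k) (s := l + 1) (by lia)
      (fiberEquiv_expVec_iff.2 ⟨?_, ?_, ?_⟩) <;> ring

lemma isNormalFormSet_normalExps (a : ℕ) :
    IsNormalFormSet (symExp a (a + 1) (a + (a + 1))) (normalExps a) where
  not_redundant α _ := not_redundant_of_balanced a (a + 1) α
  exists_fiberEquiv α := by
    obtain ⟨i, j, k, l, rfl⟩ := exists_eq_expVec α
    exact .inr (exists_fiberEquiv_mem_normalExps a i j k l)
  eq_of_fiberEquiv α hα β hβ hαβ := by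
    obtain ⟨i, j, k, l, rfl⟩ := exists_eq_expVec α
    obtain ⟨p, q, r, s, rfl⟩ := exists_eq_expVec β
    rw [expVec_mem_normalExps] at hα hβ
    obtain ⟨t, hij, hik⟩ := hαβ.exists_multiple (Nat.succ_pos a) (by simp)
    have hdeg := (fiberEquiv_expVec_iff.1 hαβ).1
    have hsum : (j + r - q - k : ℤ) = (2 * a + 1) * t := by push_cast at hik; linarith
    have ht : t = 0 := by
      obtain ht | ht | ht := lt_trichotomy t 0
      · nlinarith
      · exact ht
      · nlinarith
    subst ht
    simp only [expVec_inj]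
    lia

lemma IsFiberConeIdeal.hasRegularPair
    (hJ : IsFiberConeIdeal (symExp a (a + 1) (a + (a + 1))) J) : HasRegularPair J := by
  have hreg := isWeaklyRegular_mk_X_pair_of_isCompl (x := 0) (y := 3)
    (hJ.isCompl_restrictSupport (isNormalFormSet_normalExps a)) (by decide)
    (by simp [normalExps]) (by simp [normalExps])
  exact ⟨X 0, X_mem_idealOfVars 0, X 3, X_mem_idealOfVars 3,
    isRegular_mk_pair_of_mem idealOfVars_ne_top hJ.le_idealOfVars (X_mem_idealOfVars 0)
      (X_mem_idealOfVars 3) hreg⟩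

lemma IsFiberConeIdeal.eq_span_binomialGens
    (hJ : IsFiberConeIdeal (symExp a (a + 1) (a + (a + 1))) J) :
    J = Ideal.span (Set.range fun t : Fin 3 ↦ binomialGens K a 0 t.castSucc) := by
  set L := Ideal.span (Set.range fun t : Fin 3 ↦ binomialGens K a 0 t.castSucc)
  have hmem (t : Fin 3) : binomialGens K a 0 t.castSucc ∈ L := Ideal.subset_span ⟨t, rfl⟩
  have h0 : X 0 ∈ L ⊔ Ideal.span {X 0, X 3} := Ideal.mem_sup_right (Ideal.subset_span (by simp))
  have h3 : X 3 ∈ L ⊔ Ideal.span {X 0, X 3} := Ideal.mem_sup_right (Ideal.subset_span (by simp))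
  have hL : L.IsHomogeneous (homogeneousSubmodule (Fin 4) K) :=
    Ideal.homogeneous_span _ _ (Set.forall_mem_range.2 fun t ↦
      ⟨_, isHomogeneous_binomialGens a 0 t.castSucc⟩)
  have hLJ : L ≤ J :=
    Ideal.span_le.2 (Set.range_subset_iff.2 fun t ↦ hJ.binomialGens_mem (d := 0) t.castSucc)
  have hiso (j) (hj : j < a + 1) :
      Isolated (symExp a (a + 1) (a + (a + 1))) (expVec 0 j 0 0) :=
    isolated_of_add_lt (by simp) (by lia)
  have hJL : J ≤ L ⊔ Ideal.span {X 0, X 3} :=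
    hJ.le_of_innerGens hiso h0 h3
      (innerGens_mem_of_binomialGens_mem (d := 0) h0 h3 fun t ↦ Ideal.mem_sup_left (hmem t))
  exact hJ.hasRegularPair.eq_of_le_sup_span_pair hJ.isHomogeneous hL hLJ
    (X_mem_idealOfVars 0) (X_mem_idealOfVars 3)
    (hJ.idealOfVars_le_radical (d := 0)) hJL

end ConsecutiveExponents

section SymmetricFiberCone

variable {K : Type*} [Field K] {a b c : ℕ} {J : Ideal (MvPolynomial (Fin 4) K)}

theorem hasRegularPair_iff_of_eq (ha : 0 < a) (hab : a < b) (hco : Nat.Coprime a b)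
    (hJ : IsFiberConeIdeal (symExp a b (a + b)) J) :
    HasRegularPair J ↔ ∃ G : Finset (MvPolynomial (Fin 4) K), G.card ≤ 3 ∧
      J = Ideal.span (G : Set (MvPolynomial (Fin 4) K)) := by
  classical
  obtain ⟨d, rfl⟩ := Nat.exists_eq_add_of_lt hab
  obtain rfl | hd := d.eq_zero_or_pos
  · refine iff_of_true hJ.hasRegularPair
      ⟨Finset.univ.image fun t : Fin 3 ↦ binomialGens K a 0 t.castSucc, Finset.card_image_le, ?_⟩
    rw [Finset.coe_image, Finset.coe_univ, Set.image_univ]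
    exact hJ.eq_span_binomialGens
  · exact iff_of_false (hJ.not_hasRegularPair hd hco) (hJ.not_exists_card_le_three ha hd hco)

theorem hasRegularPair_iff_exists_generators_card_le_three (ha : 0 < a) (hab : a < b) (hbc : b < c)
    (hgcd : Nat.gcd a (Nat.gcd b c) = 1) (hJ : IsFiberConeIdeal (symExp a b c) J) :
    HasRegularPair J ↔ ∃ G : Finset (MvPolynomial (Fin 4) K), G.card ≤ 3 ∧
      J = Ideal.span (G : Set (MvPolynomial (Fin 4) K)) := by
  obtain h | rfl | h := lt_trichotomy c (a + b)
  · exact hasRegularPair_iff_of_lt hab hbc h hJ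
  · rw [← Nat.gcd_assoc, Nat.gcd_eq_left (dvd_add (Nat.gcd_dvd_left a b) (Nat.gcd_dvd_right a b))]
      at hgcd
    exact hasRegularPair_iff_of_eq ha hab hgcd hJ
  · exact hasRegularPair_iff_of_gt ha hab h hJ

lemma IsFiberConeIdeal.ne_bot (hJ : IsFiberConeIdeal (symExp a b c) J) : J ≠ ⊥ := by
  rintro rfl
  obtain h | rfl | h := lt_trichotomy c (a + b)
  · simpa using hJ.monomial_mem (redundant_inner_pair h)
  · have h := hJ.monomial_sub_mem
      (fiberEquiv_expVec_iff.2 ⟨rfl, by ring, by ring⟩ :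
        FiberEquiv (symExp a b (a + b)) (expVec 1 0 0 1) (expVec 0 1 1 0))
    simp [sub_eq_zero, monomial_left_inj] at h
  · simpa using hJ.monomial_mem (redundant_outer_pair h)

lemma monomial_symExp {u : Fin 4 → MvPolynomial (Fin 2) K}
    (hu0 : u 0 = X 0 ^ c) (hu1 : u 1 = X 0 ^ b * X 1 ^ a)
    (hu2 : u 2 = X 0 ^ a * X 1 ^ b) (hu3 : u 3 = X 1 ^ c) :
    (fun i ↦ monomial (symExp a b c i) 1) = u := by
  ext1 i
  rw [monomial_eq, Finsupp.prod_fintype _ _ (by simp), Fin.prod_univ_two]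
  fin_cases i <;> simp [symExp, *]

lemma isFiberConeIdeal_symExp_of_forall_mem_iff {u : Fin 4 → MvPolynomial (Fin 2) K}
    (hu0 : u 0 = X 0 ^ c) (hu1 : u 1 = X 0 ^ b * X 1 ^ a)
    (hu2 : u 2 = X 0 ^ a * X 1 ^ b) (hu3 : u 3 = X 1 ^ c)
    (hJ : ∀ f, f ∈ J ↔ ∀ d, aeval u (homogeneousComponent d f) ∈
      Ideal.span {X 0, X 1} * Ideal.span {u 0, u 1, u 2, u 3} ^ d) :
    IsFiberConeIdeal (symExp a b c) J := by
  have hvars : idealOfVars (Fin 2) K = Ideal.span {X 0, X 1} := by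
    rw [idealOfVars]
    congr 1
    ext f
    simp [eq_comm]
  have hrange : Set.range u = {u 0, u 1, u 2, u 3} := by
    ext f
    simp [Fin.exists_fin_succ, eq_comm]
  rw [IsFiberConeIdeal, hvars, monomial_symExp hu0 hu1 hu2 hu3, hrange]
  exact hJ

end SymmetricFiberCone

end FiberCone

theorem stmt_16 {K : Type*} [Field K] (a b c : ℕ)
    (ha : 0 < a) (hab : a < b) (hbc : b < c)
    (hgcd : Nat.gcd a (Nat.gcd b c) = 1)
    (u : Fin 4 → MvPolynomial (Fin 2) K)
    (hu0 : u 0 = X 0 ^ c) (hu1 : u 1 = X 0 ^ b * X 1 ^ a)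
    (hu2 : u 2 = X 0 ^ a * X 1 ^ b) (hu3 : u 3 = X 1 ^ c)
    (I mm : Ideal (MvPolynomial (Fin 2) K))
    (hI : I = Ideal.span {u 0, u 1, u 2, u 3})
    (hmm : mm = Ideal.span {(X 0 : MvPolynomial (Fin 2) K), X 1})
    (J : Ideal (MvPolynomial (Fin 4) K))
    (hJ : ∀ f : MvPolynomial (Fin 4) K,
      f ∈ J ↔ ∀ d : ℕ, aeval u (homogeneousComponent d f) ∈ mm * I ^ d)
    :
    ((∃ f g : MvPolynomial (Fin 4) K,
        f ∈ Ideal.span {(X 0 : MvPolynomial (Fin 4) K), X 1, X 2, X 3} ∧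
        g ∈ Ideal.span {(X 0 : MvPolynomial (Fin 4) K), X 1, X 2, X 3} ∧
        RingTheory.Sequence.IsRegular (MvPolynomial (Fin 4) K ⧸ J)
          [Ideal.Quotient.mk J f, Ideal.Quotient.mk J g]) ↔
      (∃ G : Finset (MvPolynomial (Fin 4) K), G.card ≤ 3 ∧ J = Ideal.span (G : Set (MvPolynomial (Fin 4) K)))) ∧
    ((∃ G : Finset (MvPolynomial (Fin 4) K), G.card ≤ 3 ∧ J = Ideal.span (G : Set (MvPolynomial (Fin 4) K))) ↔
      (∃ G : Finset (MvPolynomial (Fin 4) K), G.card = 3 ∧ J = Ideal.span (G : Set (MvPolynomial (Fin 4) K)))) := by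
  subst hI hmm
  have hfiber := FiberCone.isFiberConeIdeal_symExp_of_forall_mem_iff hu0 hu1 hu2 hu3 hJ
  have hregular :=
    FiberCone.hasRegularPair_iff_exists_generators_card_le_three ha hab hbc hgcd hfiber
  simp only [FiberCone.HasRegularPair, FiberCone.idealOfVars_fin_four] at hregular
  refine ⟨⟨?_, ?_⟩, FiberCone.exists_card_le_iff_exists_card_eq hfiber.ne_bot 3⟩
  · rintro ⟨f, g, hf, hg, hfg⟩
    exact hregular.1 ⟨f, hf, g, hg, hfg⟩
  · intro hG
    obtain ⟨f, hf, g, hg, hfg⟩ := hregular.2 hG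
    exact ⟨f, g, hf, hg, hfg⟩
end
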